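/- The Dirichlet Laplacian on the Fichera layer Λ has at most finitely many bound states below the threshold λ₁(Γ): the linear span in L²(Λ) of all nonzero functions u ∈ H¹₀(Λ) satisfying −Δu = λu weakly in Λ for some λ < λ₁(Γ) is finite-dimensional. -/

import Mathlib

noncomputable section
open MeasureTheory Set Real

/-- The interval `I = (-1,0)`. -/
def II : Set ℝ := Set.Ioo (-1) 0

/-- The broken guide `Γ = {x ∈ ℝ² : -1 < min(x₁,x₂) < 0}`. -/
def Gam : Set (ℝ × ℝ) := {p | -1 < min p.1 p.2 ∧ min p.1 p.2 < 0}

/-- The box `□_L = {x : max(|x₁+1|,|x₂+1|) < L}`. -/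
def Box (L : ℝ) : Set (ℝ × ℝ) := {p | |p.1 + 1| < L ∧ |p.2 + 1| < L}

/-- The finite guide `Γ_R = Γ ∩ □_{R+1}`. -/
def GamR (R : ℝ) : Set (ℝ × ℝ) := Gam ∩ Box (R + 1)

/-- The Neumann part `Σ_R = ∂Γ_R ∩ ∂□_{R+1}` of the boundary. -/
def Sig (R : ℝ) : Set (ℝ × ℝ) := frontier (GamR R) ∩ frontier (Box (R + 1))

/-- The Dirichlet part `∂Γ_R ∖ Σ_R` of the boundary. -/
def DirB (R : ℝ) : Set (ℝ × ℝ) := frontier (GamR R) \ Sig R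

/-- Squared gradient `|∇u|² = (∂₁u)² + (∂₂u)²`. -/
def gradSq2 (u : ℝ × ℝ → ℝ) (p : ℝ × ℝ) : ℝ :=
  (fderiv ℝ u p (1, 0)) ^ 2 + (fderiv ℝ u p (0, 1)) ^ 2

/-- Admissible functions for the mixed problem on `Γ_R`: `C¹` up to the boundary
(modelled by a globally `C¹` extension) vanishing on the Dirichlet part. -/
def AdmR (R : ℝ) (u : ℝ × ℝ → ℝ) : Prop :=
  ContDiff ℝ 1 u ∧ ∀ p ∈ DirB R, u p = 0

/-- First Rayleigh quotient `λ₁(Γ_R)` of the mixed Dirichlet–Neumann Laplacian on `Γ_R`. -/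
def lamR (R : ℝ) : ℝ :=
  sInf {r | ∃ u : ℝ × ℝ → ℝ, AdmR R u ∧ (∫ p in GamR R, (u p) ^ 2) ≠ 0 ∧
    r = (∫ p in GamR R, gradSq2 u p) / ∫ p in GamR R, (u p) ^ 2}

/-- First Rayleigh quotient `λ₁(Γ)` of the Dirichlet Laplacian on the broken guide `Γ`. -/
def lamG : ℝ :=
  sInf {r | ∃ u : ℝ × ℝ → ℝ, ContDiff ℝ 1 u ∧ HasCompactSupport u ∧ tsupport u ⊆ Gam ∧
    (∫ p in Gam, (u p) ^ 2) ≠ 0 ∧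
    r = (∫ p in Gam, gradSq2 u p) / ∫ p in Gam, (u p) ^ 2}

/-- `ω = √(π² − λ₁(Γ))`. -/
def omega : ℝ := Real.sqrt (π ^ 2 - lamG)

/-- The Fichera layer `Λ = {x ∈ ℝ³ : -1 < min(x₁,x₂,x₃) < 0}`. -/
def Lam3 : Set (ℝ × ℝ × ℝ) :=
  {x | -1 < min x.1 (min x.2.1 x.2.2) ∧ min x.1 (min x.2.1 x.2.2) < 0}

/-- The residual domain `Ω_R³ = {x : x₃ > R and (x₁,x₂) ∈ Γ_{x₃}}`. -/
def Om3 (R : ℝ) : Set (ℝ × ℝ × ℝ) := {x | R < x.2.2 ∧ (x.1, x.2.1) ∈ GamR x.2.2}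

/-- Squared gradient in 3D: `|∇u|² = (∂₁u)² + (∂₂u)² + (∂₃u)²`. -/
def gradSq3 (u : ℝ × ℝ × ℝ → ℝ) (x : ℝ × ℝ × ℝ) : ℝ :=
  (fderiv ℝ u x (1, 0, 0)) ^ 2 + (fderiv ℝ u x (0, 1, 0)) ^ 2 + (fderiv ℝ u x (0, 0, 1)) ^ 2

/-- Partial derivative in direction `e` in 3D. -/
def pd3 (e : ℝ × ℝ × ℝ) (u : ℝ × ℝ × ℝ → ℝ) : ℝ × ℝ × ℝ → ℝ := fun x => fderiv ℝ u x e

/-- Laplacian in 3D. -/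
def lap3 (u : ℝ × ℝ × ℝ → ℝ) (x : ℝ × ℝ × ℝ) : ℝ :=
  pd3 (1,0,0) (pd3 (1,0,0) u) x + pd3 (0,1,0) (pd3 (0,1,0) u) x +
    pd3 (0,0,1) (pd3 (0,0,1) u) x

/-- Eigenfunction of the Dirichlet Laplacian on the Fichera layer `Λ` with eigenvalue
`lam`: a nonzero function in `H¹₀(Λ) ∩ L²`, extended by `0` outside `Λ`, classical
solution of `-Δu = λ u` in `Λ`. -/
def IsEigenLam (lam : ℝ) (u : ℝ × ℝ × ℝ → ℝ) : Prop :=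
  Continuous u ∧ (∀ x ∉ Lam3, u x = 0) ∧ ContDiffOn ℝ 2 u Lam3 ∧
  IntegrableOn (fun x => (u x) ^ 2) Lam3 ∧ IntegrableOn (fun x => gradSq3 u x) Lam3 ∧
  (∀ x ∈ Lam3, -(lap3 u x) = lam * u x) ∧ (∃ x, u x ≠ 0)

open Filter Topology

/-!
Outside a cube, one coordinate `t` of a point of `Λ` is the largest one, and the other two range
over `Γ` cut off at distance `t`. Because of the spectral gap `λ₁(Γ) < π²`, truncating `Γ` at
distance `t` costs only `K / t⁴`, and Hardy's inequality in `t` absorbs this cost up to a small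
multiple of the energy in the cube. Hence `∫ |∇u|² - λ₁(Γ) ∫ u²` is bounded below by half the
energy minus a multiple of the mass in the cube; by Poincaré's inequality on a fine grid it is
nonnegative as soon as finitely many cell averages of `u` vanish. On the span of the bound states,
however, it is negative definite.
-/

/-! ### Test functions -/

theorem isClosedEmbedding_prodMk_left {X Y : Type*} [TopologicalSpace X] [TopologicalSpace Y]
    [T1Space Y] (y : Y) : IsClosedEmbedding fun x : X => (x, y) :=
  .of_continuous_injective_isClosedMap (by fun_prop) (Prod.mk_left_injective y) fun s hs => by
    simpa [Set.prod_singleton] using hs.prod (isClosed_singleton (x := y))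

theorem isClosedEmbedding_prodMk_right {X Y : Type*} [TopologicalSpace X] [TopologicalSpace Y]
    [T1Space X] (x : X) : IsClosedEmbedding fun y : Y => (x, y) :=
  .of_continuous_injective_isClosedMap (by fun_prop) (Prod.mk_right_injective x) fun s hs => by
    simpa [Set.singleton_prod] using (isClosed_singleton (x := x)).prod hs

/-- The class `C¹_c(U)` of compactly supported `C¹` functions with support in `U`, a form core
of `H¹₀(U)`. -/
structure TestFun {E : Type*} [NormedAddCommGroup E] [NormedSpace ℝ E] (U : Set E) (g : E → ℝ) :
    Prop where
  contDiff : ContDiff ℝ 1 g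
  hasCompactSupport : HasCompactSupport g
  tsupport_subset : tsupport g ⊆ U

namespace TestFun

variable {E F : Type*} [NormedAddCommGroup E] [NormedSpace ℝ E] [NormedAddCommGroup F]
  [NormedSpace ℝ F] {U V : Set E} {g : E → ℝ}

theorem mono (hg : TestFun U g) (h : U ⊆ V) : TestFun V g :=
  ⟨hg.contDiff, hg.hasCompactSupport, hg.tsupport_subset.trans h⟩

theorem continuous (hg : TestFun U g) : Continuous g := hg.contDiff.continuous

theorem differentiableAt (hg : TestFun U g) (x : E) : DifferentiableAt ℝ g x :=
  hg.contDiff.differentiable one_ne_zero x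

theorem eq_zero (hg : TestFun U g) {x : E} (hx : x ∉ U) : g x = 0 :=
  image_eq_zero_of_notMem_tsupport fun h => hx (hg.tsupport_subset h)

theorem fderiv_eq_zero (hg : TestFun U g) {x : E} (hx : x ∉ U) : fderiv ℝ g x = 0 :=
  image_eq_zero_of_notMem_tsupport fun h => hx (hg.tsupport_subset (tsupport_fderiv_subset ℝ h))

theorem continuous_fderiv_apply (hg : TestFun U g) (e : E) :
    Continuous fun x => fderiv ℝ g x e :=
  (hg.contDiff.continuous_fderiv one_ne_zero).clm_apply continuous_const

theorem hasCompactSupport_fderiv_apply (hg : TestFun U g) (e : E) :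
    HasCompactSupport fun x => fderiv ℝ g x e :=
  hg.hasCompactSupport.fderiv_apply ℝ e

theorem mul (hg : TestFun U g) {χ : E → ℝ} (hχ : ContDiff ℝ 1 χ) : TestFun U (χ * g) :=
  ⟨hχ.mul hg.contDiff, hg.hasCompactSupport.mul_left,
    (tsupport_mul_subset_right (f := χ)).trans hg.tsupport_subset⟩

theorem comp (hg : TestFun U g) {φ : F → E} (hφ : ContDiff ℝ 1 φ) (hφ' : IsClosedEmbedding φ) :
    TestFun (φ ⁻¹' U) (g ∘ φ) :=
  ⟨hg.contDiff.comp hφ, hg.hasCompactSupport.comp_isClosedEmbedding hφ',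
    (tsupport_comp_subset_preimage g hφ.continuous).trans (preimage_mono hg.tsupport_subset)⟩

section Slice

variable {W : Set (E × F)} {w : E × F → ℝ}

theorem slice_left (hw : TestFun W w) (y : F) : TestFun {x | (x, y) ∈ W} fun x => w (x, y) :=
  hw.comp (contDiff_id.prodMk contDiff_const) (isClosedEmbedding_prodMk_left y)

theorem slice_right (hw : TestFun W w) (x : E) : TestFun {y | (x, y) ∈ W} fun y => w (x, y) :=
  hw.comp (contDiff_const.prodMk contDiff_id) (isClosedEmbedding_prodMk_right x)

theorem fderiv_slice_left (hw : TestFun W w) (x v : E) (y : F) :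
    fderiv ℝ (fun x => w (x, y)) x v = fderiv ℝ w (x, y) (v, 0) := by
  have h : HasFDerivAt (fun x => w (x, y)) _ x :=
    HasFDerivAt.comp x (hw.differentiableAt (x, y)).hasFDerivAt (hasFDerivAt_prodMk_left x y)
  simp [h.fderiv]

theorem fderiv_slice_right (hw : TestFun W w) (x : E) (y v : F) :
    fderiv ℝ (fun y => w (x, y)) y v = fderiv ℝ w (x, y) (0, v) := by
  have h : HasFDerivAt (fun y => w (x, y)) _ y :=
    HasFDerivAt.comp y (hw.differentiableAt (x, y)).hasFDerivAt (hasFDerivAt_prodMk_right x y)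
  simp [h.fderiv]

end Slice

section Integrability

variable [MeasurableSpace E] [OpensMeasurableSpace E] {μ : Measure E} [IsFiniteMeasureOnCompacts μ]

theorem integrable_mul_sq (hg : TestFun U g) {c : E → ℝ} (hc : Continuous c) :
    Integrable (fun x => c x * g x ^ 2) μ := by
  have hs : HasCompactSupport fun x => g x ^ 2 :=
    hg.hasCompactSupport.comp_left (g := (· ^ 2)) (by simp)
  exact (hc.mul (hg.continuous.pow 2)).integrable_of_hasCompactSupport hs.mul_left

theorem integrable_sq (hg : TestFun U g) : Integrable (fun x => g x ^ 2) μ := by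
  simpa using hg.integrable_mul_sq (μ := μ) (c := fun _ => 1) continuous_const

theorem integrable_fderiv_apply_sq (hg : TestFun U g) (e : E) :
    Integrable (fun x => fderiv ℝ g x e ^ 2) μ := by
  have hs : HasCompactSupport fun x => fderiv ℝ g x e ^ 2 :=
    (hg.hasCompactSupport_fderiv_apply e).comp_left (g := (· ^ 2)) (by simp)
  exact ((hg.continuous_fderiv_apply e).pow 2).integrable_of_hasCompactSupport hs

end Integrability

theorem integrable_fderiv_apply_sq_slice_right {W : Set (E × F)} {w : E × F → ℝ}
    [MeasurableSpace F] [OpensMeasurableSpace F] {ν : Measure F} [IsFiniteMeasureOnCompacts ν]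
    (hw : TestFun W w) (x : E) (e : E × F) :
    Integrable (fun y => fderiv ℝ w (x, y) e ^ 2) ν := by
  have hs : HasCompactSupport fun z => fderiv ℝ w z e ^ 2 :=
    (hw.hasCompactSupport_fderiv_apply e).comp_left (g := (· ^ 2)) (by simp)
  have hc : Continuous fun z => fderiv ℝ w z e ^ 2 := (hw.continuous_fderiv_apply e).pow 2
  exact (hc.comp (Continuous.prodMk_right x)).integrable_of_hasCompactSupport
    (hs.comp_isClosedEmbedding (isClosedEmbedding_prodMk_right x))

theorem integrable_deriv_sq {U : Set ℝ} {f : ℝ → ℝ} (hf : TestFun U f) :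
    Integrable fun t => deriv f t ^ 2 :=
  hf.integrable_fderiv_apply_sq 1

end TestFun

/-! ### Riccati solutions and one-dimensional inequalities -/

-- `f'² + (c' + c²) f² = (f' - c f)² + (c f²)'`
theorem integral_riccati_mul_sq_le {f c c' : ℝ → ℝ} {a b : ℝ} (hab : a ≤ b)
    (hf : ContDiff ℝ 1 f) (hc : ∀ t ∈ Icc a b, HasDerivAt c (c' t) t)
    (hc' : ContinuousOn c' (Icc a b)) :
    ∫ t in a..b, (-c' t - c t ^ 2) * f t ^ 2 ≤
      (∫ t in a..b, deriv f t ^ 2) + c a * f a ^ 2 - c b * f b ^ 2 := by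
  have hfc := hf.continuous.continuousOn (s := Icc a b)
  have hf'c := (hf.continuous_deriv le_rfl).continuousOn (s := Icc a b)
  have hcc : ContinuousOn c (Icc a b) := fun t ht => (hc t ht).continuousAt.continuousWithinAt
  have intervalInt {u : ℝ → ℝ} (hu : ContinuousOn u (Icc a b)) :
      IntervalIntegrable u volume a b := hu.intervalIntegrable_of_Icc hab
  have hderiv : ∀ t ∈ uIcc a b, HasDerivAt (fun t => c t * f t ^ 2)
      (c' t * f t ^ 2 + c t * (2 * f t * deriv f t)) t := fun t ht => by
    have h := (hf.differentiable one_ne_zero t).hasDerivAt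
    simpa using (hc t (by rwa [uIcc_of_le hab] at ht)).fun_mul (h.fun_pow 2)
  have hFTC := intervalIntegral.integral_eq_sub_of_hasDerivAt hderiv (intervalInt (by fun_prop))
  suffices h : 0 ≤ ∫ t in a..b, (deriv f t ^ 2 - (-c' t - c t ^ 2) * f t ^ 2 -
      (c' t * f t ^ 2 + c t * (2 * f t * deriv f t))) by
    rw [intervalIntegral.integral_sub (intervalInt (by fun_prop)) (intervalInt (by fun_prop)),
      intervalIntegral.integral_sub (intervalInt (by fun_prop)) (intervalInt (by fun_prop)),
      hFTC] at h
    linarith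
  refine intervalIntegral.integral_nonneg hab fun t _ => ?_
  calc (0 : ℝ) ≤ (deriv f t - c t * f t) ^ 2 := sq_nonneg _
    _ = _ := by ring

theorem hasDerivAt_pi_mul_cot {t : ℝ} (ht : sin (π * t) ≠ 0) :
    HasDerivAt (fun t => π * cot (π * t)) (-π ^ 2 - (π * cot (π * t)) ^ 2) t := by
  have h : HasDerivAt (fun t : ℝ => π * t) π t := by simpa using (hasDerivAt_id t).const_mul π
  simp only [cot_eq_cos_div_sin]
  refine ((h.cos.fun_div h.sin ht).const_mul π).congr_deriv ?_
  field_simp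

theorem exists_Ioo_superset_of_isCompact {K : Set ℝ} (hK : IsCompact K) {c d : ℝ} (hcd : c < d)
    (h : K ⊆ Ioo c d) : ∃ a b, c < a ∧ a ≤ b ∧ b < d ∧ K ⊆ Ioo a b := by
  have hmid : (c + d) / 2 ∈ Ioo c d := ⟨by linarith, by linarith⟩
  have hK' : IsCompact (insert ((c + d) / 2) K) := hK.insert _
  obtain ⟨p, hp, hp_le⟩ := hK'.exists_isLeast (insert_nonempty _ _)
  obtain ⟨q, hq, hq_ge⟩ := hK'.exists_isGreatest (insert_nonempty _ _)
  have hcp : c < p := (insert_subset hmid h hp).1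
  have hqd : q < d := (insert_subset hmid h hq).2
  have hpq : p ≤ q := hp_le hq
  exact ⟨(c + p) / 2, (q + d) / 2, by linarith, by linarith, by linarith, fun x hx =>
    ⟨by linarith [hp_le (mem_insert_of_mem _ hx)], by linarith [hq_ge (mem_insert_of_mem _ hx)]⟩⟩

theorem wirtinger_inequality {f : ℝ → ℝ} (hf : TestFun (Ioo (-1) 0) f) :
    π ^ 2 * ∫ t, f t ^ 2 ≤ ∫ t, deriv f t ^ 2 := by
  obtain ⟨a, b, ha, hab, hb, hsupp⟩ : ∃ a b, -1 < a ∧ a ≤ b ∧ b < 0 ∧ tsupport f ⊆ Ioo a b :=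
    exists_Ioo_superset_of_isCompact hf.hasCompactSupport (by norm_num) hf.tsupport_subset
  have hsin : ∀ t ∈ Icc a b, sin (π * t) ≠ 0 := fun t ht => by
    refine (sin_neg_of_neg_of_neg_pi_lt ?_ ?_).ne <;> nlinarith [pi_pos, ht.1, ht.2]
  have hfa : f a = 0 := image_eq_zero_of_notMem_tsupport fun h => (hsupp h).1.false
  have hfb : f b = 0 := image_eq_zero_of_notMem_tsupport fun h => (hsupp h).2.false
  have h := integral_riccati_mul_sq_le hab hf.contDiff
    (fun t ht => hasDerivAt_pi_mul_cot (hsin t ht)) (by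
      have : ContinuousOn (fun t => π * cot (π * t)) (Icc a b) := fun t ht =>
        (hasDerivAt_pi_mul_cot (hsin t ht)).continuousAt.continuousWithinAt
      fun_prop)
  have hsub : tsupport f ⊆ Ioc a b := hsupp.trans Ioo_subset_Ioc_self
  simp only [hfa, hfb, neg_sub, sub_neg_eq_add, add_sub_cancel_left,
    intervalIntegral.integral_const_mul] at h
  rw [intervalIntegral.integral_eq_integral_of_support_subset,
    intervalIntegral.integral_eq_integral_of_support_subset] at h
  · simpa using h
  · exact fun t ht => hsub (support_deriv_subset fun h => ht (by simp [h]))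
  · exact fun t ht => hsub (subset_tsupport f fun h => ht (by simp [h]))

theorem setIntegral_Ioi_eq_intervalIntegral {u : ℝ → ℝ} {a b : ℝ} (hab : a ≤ b)
    (hu : ∀ t, b < t → u t = 0) : ∫ t in Ioi a, u t = ∫ t in a..b, u t := by
  rw [intervalIntegral.integral_of_le hab]
  exact setIntegral_eq_of_subset_of_forall_sdiff_eq_zero measurableSet_Ioi Ioc_subset_Ioi_self
    fun t ht => hu t (by simpa [mem_Ioi.1 ht.1] using ht.2)

-- `c = 1 / (2t)` solves `-c' - c² = 1 / (4t²)`
theorem hardy_inequality_Ioi {f : ℝ → ℝ} (hf : TestFun univ f) {R : ℝ} (hR : 0 < R) :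
    ∫ t in Ioi R, f t ^ 2 / (4 * t ^ 2) ≤ (∫ t in Ioi R, deriv f t ^ 2) + f R ^ 2 / (2 * R) := by
  obtain ⟨b, hb⟩ := hf.hasCompactSupport.isBounded.bddAbove
  have hRb : R ≤ max R b := le_max_left _ _
  have hout : ∀ t, max R b < t → t ∉ tsupport f := fun t ht h =>
    ((le_max_right R b).trans_lt ht).not_ge (hb h)
  have hpos : ∀ t ∈ Icc R (max R b), t ≠ 0 := fun t ht => (hR.trans_le ht.1).ne'
  have hc : ∀ t ∈ Icc R (max R b), HasDerivAt (fun t : ℝ => (2 * t)⁻¹) (-(2 / (2 * t) ^ 2)) t :=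
    fun t ht => by
      simpa [neg_div] using
        ((hasDerivAt_id t).const_mul 2).fun_inv (mul_ne_zero two_ne_zero (hpos t ht))
  rw [setIntegral_Ioi_eq_intervalIntegral hRb fun t ht => by
      simp [image_eq_zero_of_notMem_tsupport (hout t ht)],
    setIntegral_Ioi_eq_intervalIntegral hRb fun t ht => by
      have := image_eq_zero_of_notMem_tsupport fun h => hout t ht (tsupport_deriv_subset h)
      simp [this]]
  calc ∫ t in R..max R b, f t ^ 2 / (4 * t ^ 2)
      = ∫ t in R..max R b, (-(-(2 / (2 * t) ^ 2)) - (2 * t)⁻¹ ^ 2) * f t ^ 2 :=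
        intervalIntegral.integral_congr fun t ht => by
          have := hpos t (by rwa [uIcc_of_le hRb] at ht)
          field_simp
          ring
    _ ≤ _ := integral_riccati_mul_sq_le hRb hf.contDiff hc <| ContinuousOn.neg <|
        ContinuousOn.div₀ (by fun_prop) (by fun_prop) fun t ht => by simpa using hpos t ht
    _ ≤ _ := by
        have : 0 ≤ (2 * max R b)⁻¹ * f (max R b) ^ 2 := by positivity
        rw [inv_mul_eq_div]
        linarith

-- `c = t - R + 1` vanishes at `R - 1`, equals `1` at `R`, and `c' + c² ≤ 2` in between
theorem sq_le_integral_deriv_sq_add {f : ℝ → ℝ} (hf : ContDiff ℝ 1 f) (R : ℝ) :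
    f R ^ 2 ≤ ∫ t in (R - 1)..R, (deriv f t ^ 2 + 2 * f t ^ 2) := by
  have hfc := hf.continuous
  have := hf.continuous_deriv le_rfl
  have h := integral_riccati_mul_sq_le (c := fun t => t - R + 1) (c' := fun _ => 1)
    (by linarith : R - 1 ≤ R) hf
    (fun t _ => ((hasDerivAt_id t).sub_const R).add_const 1) continuousOn_const
  have hmono : ∫ t in (R - 1)..R, -2 * f t ^ 2 ≤
      ∫ t in (R - 1)..R, (-1 - (t - R + 1) ^ 2) * f t ^ 2 := by
    refine intervalIntegral.integral_mono_on (by linarith)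
      (Continuous.intervalIntegrable (by fun_prop) _ _)
      (Continuous.intervalIntegrable (by fun_prop) _ _) fun t ht => ?_
    gcongr
    nlinarith [ht.1, ht.2]
  rw [intervalIntegral.integral_add (Continuous.intervalIntegrable (by fun_prop) _ _)
    (Continuous.intervalIntegrable (by fun_prop) _ _)]
  simp only [intervalIntegral.integral_const_mul] at hmono ⊢
  simp only [sub_self, zero_add, one_mul, sub_right_comm R 1 R, zero_sub,
    neg_add_cancel] at h
  linarith

theorem setIntegral_Ioi_div_pow_four_le {f : ℝ → ℝ} (hf : TestFun univ f) {R K : ℝ}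
    (hR : 0 < R) (hK : 24 * K ≤ R ^ 2) :
    ∫ t in Ioi R, K / max t R ^ 4 * f t ^ 2 ≤
      1 / 6 * ∫ t in Ioi R, f t ^ 2 / (4 * t ^ 2) := by
  have hmax (t : ℝ) : max t R ≠ 0 := (hR.trans_le (le_max_right t R)).ne'
  have hi : IntegrableOn (fun t => (4 * max t R ^ 2)⁻¹ * f t ^ 2) (Ioi R) :=
    (hf.integrable_mul_sq (by fun_prop (disch := simp [hmax]))).integrableOn
  rw [← integral_const_mul]
  refine setIntegral_mono_on (hf.integrable_mul_sq (by fun_prop (disch := simp [hmax])) :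
    Integrable _ volume).integrableOn
    ((hi.congr_fun (fun t (ht : R < t) => ?_) measurableSet_Ioi).const_mul _)
    measurableSet_Ioi fun t (ht : R < t) => ?_
  · simp only [max_eq_left ht.le, inv_mul_eq_div]
  · have ht0 : 0 < t := hR.trans ht
    have hKt : 24 * K ≤ t ^ 2 := hK.trans (by gcongr)
    have : K / t ^ 4 ≤ 1 / (24 * t ^ 2) := by
      rw [div_le_div_iff₀ (by positivity) (by positivity)]
      nlinarith [sq_nonneg t]
    calc K / max t R ^ 4 * f t ^ 2 ≤ 1 / (24 * t ^ 2) * f t ^ 2 := by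
          rw [max_eq_left ht.le]; gcongr
      _ = 1 / 6 * (f t ^ 2 / (4 * t ^ 2)) := by ring

theorem neg_integral_Ioc_le_integral_Ioi_sub {f : ℝ → ℝ} (hf : TestFun univ f) {R K : ℝ}
    (hR : 1 ≤ R) (hK : 24 * K ≤ R ^ 2) :
    -(1 / 6) * ∫ t in Ioc (R - 1) R, (deriv f t ^ 2 + f t ^ 2) ≤
      ∫ t in Ioi R, (deriv f t ^ 2 - K / max t R ^ 4 * f t ^ 2) := by
  have hR0 : 0 < R := by linarith
  have hmax (t : ℝ) : max t R ≠ 0 := (hR0.trans_le (le_max_right t R)).ne'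
  have hweight := setIntegral_Ioi_div_pow_four_le hf hR0 hK
  have htrace := sq_le_integral_deriv_sq_add hf.contDiff R
  rw [intervalIntegral.integral_of_le (by linarith)] at htrace
  have hdouble : ∫ t in Ioc (R - 1) R, (deriv f t ^ 2 + 2 * f t ^ 2) ≤
      2 * ∫ t in Ioc (R - 1) R, (deriv f t ^ 2 + f t ^ 2) := by
    rw [← integral_const_mul]
    refine setIntegral_mono (hf.integrable_deriv_sq.add (hf.integrable_sq.const_mul 2)).integrableOn
      ((hf.integrable_deriv_sq.add hf.integrable_sq).const_mul 2).integrableOn fun t => ?_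
    nlinarith [sq_nonneg (deriv f t)]
  have hR2 : f R ^ 2 / (2 * R) ≤ f R ^ 2 / 2 := by
    gcongr
    linarith
  have hnonneg : 0 ≤ ∫ t in Ioi R, deriv f t ^ 2 := integral_nonneg fun t => sq_nonneg _
  have hhardy := hardy_inequality_Ioi hf hR0
  rw [integral_sub hf.integrable_deriv_sq.integrableOn
    (hf.integrable_mul_sq (by fun_prop (disch := simp [hmax]))).integrableOn]
  linarith

/-! ### Approximation of finite-energy functions by test functions -/

/-- Smooth truncation at level `ε`: it vanishes where `|s| ≤ ε` and is the identity where
`s² ≥ 2ε²`. -/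
def smoothTrunc (ε s : ℝ) : ℝ := s * smoothTransition ((s / ε) ^ 2 - 1)

theorem contDiff_smoothTrunc (ε : ℝ) : ContDiff ℝ 1 (smoothTrunc ε) :=
  contDiff_id.mul (smoothTransition.contDiff.comp (by fun_prop))

theorem abs_smoothTrunc_le (ε s : ℝ) : |smoothTrunc ε s| ≤ |s| := by
  rw [smoothTrunc, abs_mul, abs_of_nonneg (smoothTransition.nonneg _)]
  exact mul_le_of_le_one_right (abs_nonneg _) (smoothTransition.le_one _)

theorem smoothTrunc_of_abs_le {ε s : ℝ} (h : |s| ≤ ε) : smoothTrunc ε s = 0 := by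
  have hle : |s / ε| ≤ 1 := by
    rw [abs_div]
    exact div_le_one_of_le₀ (h.trans (le_abs_self ε)) (abs_nonneg ε)
  rw [smoothTrunc, smoothTransition.zero_of_nonpos, mul_zero]
  linarith [(sq_le_one_iff_abs_le_one _).2 hle]

theorem smoothTrunc_of_two_le {ε s : ℝ} (h : 2 ≤ (s / ε) ^ 2) : smoothTrunc ε s = s := by
  rw [smoothTrunc, smoothTransition.one_of_one_le (by linarith), mul_one]

theorem deriv_smoothTrunc_zero {ε : ℝ} (hε : 0 < ε) : deriv (smoothTrunc ε) 0 = 0 := by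
  have h : smoothTrunc ε =ᶠ[𝓝 0] fun _ => 0 := by
    filter_upwards [Metric.ball_mem_nhds (0 : ℝ) hε] with s hs
    exact smoothTrunc_of_abs_le (le_of_lt (by simpa using hs))
  simp [h.deriv_eq]

theorem deriv_smoothTrunc_of_two_lt {ε s : ℝ} (h : 2 < (s / ε) ^ 2) :
    deriv (smoothTrunc ε) s = 1 := by
  have hopen : IsOpen {t : ℝ | 2 < (t / ε) ^ 2} := isOpen_lt (by fun_prop) (by fun_prop)
  have h' : smoothTrunc ε =ᶠ[𝓝 s] id := by
    filter_upwards [hopen.mem_nhds h] with t ht using smoothTrunc_of_two_le (le_of_lt ht)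
  simp [h'.deriv_eq]

theorem deriv_smoothTrunc_eq {ε : ℝ} (hε : ε ≠ 0) (s : ℝ) :
    deriv (smoothTrunc ε) s = deriv (smoothTrunc 1) (s / ε) := by
  have hscale : smoothTrunc ε = fun s => ε * smoothTrunc 1 (ε⁻¹ * s) := by
    ext s
    simp only [smoothTrunc, div_eq_inv_mul]
    field_simp
  rw [hscale, deriv_const_mul_field, deriv_comp_mul_left, smul_eq_mul, mul_inv_cancel_left₀ hε,
    div_eq_inv_mul]

theorem exists_abs_deriv_smoothTrunc_le :
    ∃ C, ∀ ε, 0 < ε → ∀ s, |deriv (smoothTrunc ε) s| ≤ C := by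
  obtain ⟨C, hC⟩ := (isCompact_Icc (a := (-2 : ℝ)) (b := 2)).exists_bound_of_continuousOn
    ((contDiff_smoothTrunc 1).continuous_deriv le_rfl).continuousOn
  refine ⟨max C 1, fun ε hε s => ?_⟩
  rw [deriv_smoothTrunc_eq hε.ne']
  by_cases hs : s / ε ∈ Icc (-2 : ℝ) 2
  · exact (hC _ hs).trans (le_max_left _ _)
  · rw [deriv_smoothTrunc_of_two_lt, abs_one]
    · exact le_max_right _ _
    · rw [mem_Icc, ← abs_le, not_le] at hs
      rw [div_one, ← sq_abs]
      nlinarith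

theorem eventually_two_lt_div_sq {s : ℝ} (hs : s ≠ 0) : ∀ᶠ ε in 𝓝[>] 0, 2 < (s / ε) ^ 2 := by
  have h : Tendsto (fun ε : ℝ => s ^ 2 * (ε ^ 2)⁻¹) (𝓝[>] 0) atTop :=
    (((tendsto_pow_atTop two_ne_zero).comp tendsto_inv_nhdsGT_zero).congr fun ε => by
      simp).const_mul_atTop (by positivity)
  filter_upwards [h.eventually_gt_atTop 2] with ε hε
  rwa [div_pow, div_eq_mul_inv]

theorem tendsto_smoothTrunc (s : ℝ) :
    Tendsto (fun ε => smoothTrunc ε s) (𝓝[>] 0) (𝓝 s) := by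
  rcases eq_or_ne s 0 with rfl | hs
  · simp [smoothTrunc]
  · refine tendsto_const_nhds.congr' ?_
    filter_upwards [eventually_two_lt_div_sq hs] with ε hε
    exact (smoothTrunc_of_two_le hε.le).symm

theorem tendsto_deriv_smoothTrunc {s : ℝ} (hs : s ≠ 0) :
    Tendsto (fun ε => deriv (smoothTrunc ε) s) (𝓝[>] 0) (𝓝 1) := by
  refine tendsto_const_nhds.congr' ?_
  filter_upwards [eventually_two_lt_div_sq hs] with ε hε
  exact (deriv_smoothTrunc_of_two_lt hε).symm

section ZeroSet

variable {E : Type*} [NormedAddCommGroup E] [NormedSpace ℝ E] [FiniteDimensional ℝ E]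
  [MeasurableSpace E] [BorelSpace E]

-- Along a line in the direction `e`, zeros with nonvanishing derivative are isolated.
theorem ae_fderiv_apply_eq_zero_of_eq_zero (μ : Measure E) [μ.IsAddHaarMeasure] {v : E → ℝ}
    (hv : Measurable v) (e : E) : ∀ᵐ x ∂μ, v x = 0 → fderiv ℝ v x e = 0 := by
  have hmeas : MeasurableSet {x | v x = 0 → fderiv ℝ v x e = 0} :=
    (hv (measurableSet_singleton 0)).imp (measurable_fderiv_apply_const ℝ v e
      (measurableSet_singleton 0))
  refine ae_mem_of_ae_add_linearMap_mem (LinearMap.toSpanSingleton ℝ E e)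
    (volume : Measure ℝ) μ hmeas fun y => ?_
  let Z : Set ℝ := {t | v (y + t • e) = 0}
  have hcount : {t ∈ Z | 𝓝[Z ∩ Ioi t] t = ⊥}.Countable := countable_setOfPred_isolated_right_within
  refine measure_mono_null (fun t ht => ?_) (hcount.measure_zero volume)
  obtain ⟨htZ, hne⟩ : t ∈ Z ∧ fderiv ℝ v (y + t • e) e ≠ 0 :=
    Classical.not_imp.1 ht
  refine ⟨htZ, ?_⟩
  have hdiff : DifferentiableAt ℝ v (y + t • e) := by
    by_contra h
    exact hne (by simp [fderiv_zero_of_not_differentiableAt h])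
  have hline : HasDerivAt (fun s : ℝ => y + s • e) e t := by
    simpa using ((hasDerivAt_id t).smul_const e).const_add y
  have hev : ∀ᶠ s in 𝓝[Z ∩ Ioi t] t, v (y + s • e) ≠ 0 :=
    ((hdiff.hasFDerivAt.comp_hasDerivAt t hline).eventually_ne hne).filter_mono
      (nhdsWithin_mono t fun s hs => ne_of_gt hs.2)
  rw [← Filter.empty_mem_iff_bot]
  filter_upwards [hev, self_mem_nhdsWithin] with s hs hsZ using hs hsZ.1

end ZeroSet

/-- Almost everywhere convergence dominated by an `L²` function. -/
def DominatedTendsto {α : Type*} [MeasurableSpace α] (f : ℕ → α → ℝ) (g : α → ℝ)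
    (μ : Measure α) : Prop :=
  (∀ n, AEStronglyMeasurable (f n) μ) ∧ (∀ᵐ x ∂μ, Tendsto (fun n => f n x) atTop (𝓝 (g x))) ∧
    ∃ G : α → ℝ, MemLp G 2 μ ∧ ∀ n x, |f n x| ≤ G x

namespace DominatedTendsto

variable {α : Type*} [MeasurableSpace α] {μ : Measure α} {f f' : ℕ → α → ℝ} {g g' : α → ℝ}

theorem integral_mul (h : DominatedTendsto f g μ) (h' : DominatedTendsto f' g' μ) :
    Tendsto (fun n => ∫ x, f n x * f' n x ∂μ) atTop (𝓝 (∫ x, g x * g' x ∂μ)) := by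
  obtain ⟨hf, hlim, G, hG, hfG⟩ := h
  obtain ⟨hf', hlim', G', hG', hfG'⟩ := h'
  refine tendsto_integral_of_dominated_convergence (fun x => G x * G' x)
    (fun n => (hf n).mul (hf' n)) (hG.integrable_mul hG') (fun n => .of_forall fun x => ?_) ?_
  · rw [norm_mul]
    exact mul_le_mul (hfG n x) (hfG' n x) (abs_nonneg _) ((abs_nonneg _).trans (hfG n x))
  · filter_upwards [hlim, hlim'] with x hx hx' using hx.mul hx'

theorem integral_sq (h : DominatedTendsto f g μ) :
    Tendsto (fun n => ∫ x, f n x ^ 2 ∂μ) atTop (𝓝 (∫ x, g x ^ 2 ∂μ)) := by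
  simpa only [sq] using h.integral_mul h

end DominatedTendsto

/-- Continuous functions which vanish off `U`, are `C¹` in `U`, and have finite `H¹` norm; the
classical representatives of elements of `H¹₀(U)`. -/
structure FiniteEnergy {E : Type*} [NormedAddCommGroup E] [NormedSpace ℝ E] [MeasurableSpace E]
    (U : Set E) (μ : Measure E) (v : E → ℝ) : Prop where
  continuous : Continuous v
  eq_zero : ∀ x ∉ U, v x = 0
  contDiffOn : ContDiffOn ℝ 1 v U
  memLp : MemLp v 2 μ
  memLp_restrict_fderiv : ∀ e, MemLp (fun x => fderiv ℝ v x e) 2 (μ.restrict U)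

section Cutoff

variable {E : Type*} [NormedAddCommGroup E] [NormedSpace ℝ E] [FiniteDimensional ℝ E]

/-- The standard bump function on `E`, equal to `1` on the unit ball, dilated by `ε⁻¹`. -/
def dilatedBump (E : Type*) [NormedAddCommGroup E] [NormedSpace ℝ E] [FiniteDimensional ℝ E]
    (ε : ℝ) (x : E) : ℝ :=
  (⟨1, 2, one_pos, one_lt_two⟩ : ContDiffBump (0 : E)) (ε • x)

theorem contDiff_dilatedBump (ε : ℝ) : ContDiff ℝ 1 (dilatedBump E ε) :=
  (ContDiffBump.contDiff _).comp (contDiff_const_smul ε)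

theorem hasCompactSupport_dilatedBump {ε : ℝ} (hε : ε ≠ 0) :
    HasCompactSupport (dilatedBump E ε) :=
  (ContDiffBump.hasCompactSupport _).comp_smul hε

theorem abs_dilatedBump_le_one (ε : ℝ) (x : E) : |dilatedBump E ε x| ≤ 1 :=
  abs_le.2 ⟨by linarith [show 0 ≤ dilatedBump E ε x from ContDiffBump.nonneg _],
    ContDiffBump.le_one _⟩

theorem exists_norm_fderiv_dilatedBump_le (E : Type*) [NormedAddCommGroup E] [NormedSpace ℝ E]
    [FiniteDimensional ℝ E] : ∃ C, ∀ ε x, ‖fderiv ℝ (dilatedBump E ε) x‖ ≤ |ε| * C := by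
  let f : ContDiffBump (0 : E) := ⟨1, 2, one_pos, one_lt_two⟩
  have hf : ContDiff ℝ 1 f := f.contDiff
  obtain ⟨C, hC⟩ := (hf.continuous_fderiv one_ne_zero).bounded_above_of_compact_support
    (f.hasCompactSupport.fderiv ℝ)
  refine ⟨C, fun ε x => ?_⟩
  have h : fderiv ℝ (dilatedBump E ε) x = ε • fderiv ℝ f (ε • x) := fderiv_comp_smul ..
  rw [h, norm_smul, Real.norm_eq_abs]
  gcongr
  exact hC _

theorem tendsto_dilatedBump (x : E) :
    Tendsto (fun ε => dilatedBump E ε x) (𝓝[>] 0) (𝓝 1) := by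
  refine tendsto_const_nhds.congr' ?_
  have h : Tendsto (fun ε : ℝ => ε • x) (𝓝[>] 0) (𝓝 0) :=
    (Continuous.tendsto' (f := (· • x)) (by fun_prop) _ _ (zero_smul ℝ x)).mono_left
      nhdsWithin_le_nhds
  filter_upwards [h (Metric.closedBall_mem_nhds (0 : E) one_pos)] with ε hε
  exact (ContDiffBump.one_of_mem_closedBall _ hε).symm

theorem tendsto_dilatedBump_mul_smoothTrunc (v : E → ℝ) (x : E) :
    Tendsto (fun ε => dilatedBump E ε x * smoothTrunc ε (v x)) (𝓝[>] 0) (𝓝 (v x)) := by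
  simpa using (tendsto_dilatedBump x).mul (tendsto_smoothTrunc (v x))

end Cutoff

namespace FiniteEnergy

variable {E : Type*} [NormedAddCommGroup E] [NormedSpace ℝ E] [MeasurableSpace E]
  {U : Set E} {μ : Measure E} {v : E → ℝ}

theorem tsupport_smoothTrunc_comp_subset (hv : FiniteEnergy U μ v) {ε : ℝ} (hε : 0 < ε) :
    tsupport (smoothTrunc ε ∘ v) ⊆ U := by
  have hclosed : IsClosed {x | ε ≤ |v x|} := isClosed_le continuous_const hv.continuous.abs
  have hsupp : Function.support (smoothTrunc ε ∘ v) ⊆ {x | ε ≤ |v x|} := fun x hx => by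
    by_contra h
    exact hx (smoothTrunc_of_abs_le (not_le.1 h).le)
  refine (closure_minimal hsupp hclosed).trans fun x hx => ?_
  by_contra hxU
  exact absurd hx (by simpa [hv.eq_zero x hxU] using hε)

theorem contDiffAt (hv : FiniteEnergy U μ v) (hU : IsOpen U) {x : E} (hx : x ∈ U) :
    ContDiffAt ℝ 1 v x :=
  hv.contDiffOn.contDiffAt (hU.mem_nhds hx)

theorem differentiableAt (hv : FiniteEnergy U μ v) (hU : IsOpen U) {x : E} (hx : x ∈ U) :
    DifferentiableAt ℝ v x :=
  (hv.contDiffAt hU hx).differentiableAt one_ne_zero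

theorem contDiff_smoothTrunc_comp (hv : FiniteEnergy U μ v) (hU : IsOpen U) {ε : ℝ} (hε : 0 < ε) :
    ContDiff ℝ 1 (smoothTrunc ε ∘ v) :=
  contMDiff_iff_contDiff.1 <| contMDiff_of_tsupport fun _ hx => contMDiffAt_iff_contDiffAt.2 <|
    (contDiff_smoothTrunc ε).contDiffAt.comp _
      (hv.contDiffAt hU (hv.tsupport_smoothTrunc_comp_subset hε hx))

theorem fderiv_smoothTrunc_comp (hv : FiniteEnergy U μ v) (hU : IsOpen U) {ε : ℝ} (hε : 0 < ε)
    (x : E) :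
    fderiv ℝ (smoothTrunc ε ∘ v) x = deriv (smoothTrunc ε) (v x) • fderiv ℝ v x := by
  by_cases hx : x ∈ U
  · exact (((contDiff_smoothTrunc ε).differentiable one_ne_zero _).hasDerivAt.comp_hasFDerivAt x
      (hv.differentiableAt hU hx).hasFDerivAt).fderiv
  · rw [hv.eq_zero x hx, deriv_smoothTrunc_zero hε, zero_smul]
    exact image_eq_zero_of_notMem_tsupport fun h =>
      hx (hv.tsupport_smoothTrunc_comp_subset hε (tsupport_fderiv_subset ℝ h))

theorem testFun_dilatedBump_mul_smoothTrunc [FiniteDimensional ℝ E] (hv : FiniteEnergy U μ v)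
    (hU : IsOpen U) {ε : ℝ} (hε : 0 < ε) :
    TestFun U (dilatedBump E ε * (smoothTrunc ε ∘ v)) where
  contDiff := (contDiff_dilatedBump ε).mul (hv.contDiff_smoothTrunc_comp hU hε)
  hasCompactSupport := (hasCompactSupport_dilatedBump hε.ne').mul_right
  tsupport_subset := tsupport_mul_subset_right.trans (hv.tsupport_smoothTrunc_comp_subset hε)

theorem fderiv_dilatedBump_mul_smoothTrunc [FiniteDimensional ℝ E] (hv : FiniteEnergy U μ v)
    (hU : IsOpen U) {ε : ℝ} (hε : 0 < ε) (x e : E) :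
    fderiv ℝ (dilatedBump E ε * (smoothTrunc ε ∘ v)) x e =
      dilatedBump E ε x * (deriv (smoothTrunc ε) (v x) * fderiv ℝ v x e) +
        smoothTrunc ε (v x) * fderiv ℝ (dilatedBump E ε) x e := by
  rw [fderiv_mul ((contDiff_dilatedBump ε).differentiable one_ne_zero x)
    ((hv.contDiff_smoothTrunc_comp hU hε).differentiable one_ne_zero x),
    hv.fderiv_smoothTrunc_comp hU hε]
  simp

variable [FiniteDimensional ℝ E]

theorem exists_abs_fderiv_le (hv : FiniteEnergy U μ v) (hU : IsOpen U) (e : E) :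
    ∃ C, ∀ ε ∈ Ioc (0 : ℝ) 1, ∀ x, |fderiv ℝ (dilatedBump E ε * (smoothTrunc ε ∘ v)) x e| ≤
      C * (|fderiv ℝ v x e| + |v x|) := by
  obtain ⟨B, hB⟩ := exists_norm_fderiv_dilatedBump_le E
  obtain ⟨D, hD⟩ := exists_abs_deriv_smoothTrunc_le
  have hB0 : 0 ≤ B := by simpa using (norm_nonneg _).trans (hB 1 0)
  have hD0 : 0 ≤ D := (abs_nonneg _).trans (hD 1 one_pos 0)
  refine ⟨D + B * ‖e‖, fun ε ⟨hε, hε1⟩ x => ?_⟩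
  have hbump : |fderiv ℝ (dilatedBump E ε) x e| ≤ B * ‖e‖ :=
    ((fderiv ℝ (dilatedBump E ε) x).le_of_opNorm_le (hB ε x) e).trans (by
      gcongr
      rw [abs_of_pos hε]
      exact mul_le_of_le_one_left hB0 hε1)
  rw [hv.fderiv_dilatedBump_mul_smoothTrunc hU hε]
  calc _ ≤ |dilatedBump E ε x| * (|deriv (smoothTrunc ε) (v x)| * |fderiv ℝ v x e|) +
        |smoothTrunc ε (v x)| * |fderiv ℝ (dilatedBump E ε) x e| := by
        rw [← abs_mul, ← abs_mul, ← abs_mul]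
        exact abs_add_le _ _
    _ ≤ 1 * (D * |fderiv ℝ v x e|) + |v x| * (B * ‖e‖) := by
        gcongr ?_ * (?_ * _) + ?_ * ?_
        exacts [abs_dilatedBump_le_one ε x, hD ε hε _, abs_smoothTrunc_le ε _]
    _ ≤ (D + B * ‖e‖) * (|fderiv ℝ v x e| + |v x|) := by
        have := mul_nonneg (mul_nonneg hB0 (norm_nonneg e)) (abs_nonneg (fderiv ℝ v x e))
        have := mul_nonneg hD0 (abs_nonneg (v x))
        linarith

variable [BorelSpace E]

theorem ae_tendsto_fderiv [μ.IsAddHaarMeasure] (hv : FiniteEnergy U μ v) (hU : IsOpen U) (e : E) :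
    ∀ᵐ x ∂μ, Tendsto (fun ε => fderiv ℝ (dilatedBump E ε * (smoothTrunc ε ∘ v)) x e) (𝓝[>] 0)
      (𝓝 (fderiv ℝ v x e)) := by
  obtain ⟨C, hC⟩ := exists_norm_fderiv_dilatedBump_le E
  have hbump (x : E) : Tendsto (fun ε => fderiv ℝ (dilatedBump E ε) x e) (𝓝[>] 0) (𝓝 0) := by
    have h0 : Tendsto (fun ε : ℝ => |ε| * C * ‖e‖) (𝓝[>] 0) (𝓝 0) := by
      refine tendsto_nhdsWithin_of_tendsto_nhds (Continuous.tendsto' (by fun_prop) _ _ (by simp))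
    exact squeeze_zero_norm (fun ε => (fderiv ℝ (dilatedBump E ε) x).le_of_opNorm_le (hC ε x) e) h0
  filter_upwards [ae_fderiv_apply_eq_zero_of_eq_zero μ hv.continuous.measurable e] with x hx
  have hmain : Tendsto (fun ε => deriv (smoothTrunc ε) (v x) * fderiv ℝ v x e) (𝓝[>] 0)
      (𝓝 (fderiv ℝ v x e)) := by
    by_cases h : v x = 0
    · simp [hx h]
    · simpa using (tendsto_deriv_smoothTrunc h).mul_const (fderiv ℝ v x e)
  have h := ((tendsto_dilatedBump x).mul hmain).add ((tendsto_smoothTrunc (v x)).mul (hbump x))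
  rw [one_mul, mul_zero, add_zero] at h
  refine h.congr' ?_
  filter_upwards [self_mem_nhdsWithin] with ε hε
  exact (hv.fderiv_dilatedBump_mul_smoothTrunc hU hε x e).symm

theorem memLp_fderiv [μ.IsAddHaarMeasure] (hv : FiniteEnergy U μ v) (hU : IsOpen U) (e : E) :
    MemLp (fun x => fderiv ℝ v x e) 2 μ := by
  refine (memLp_congr_ae ?_).1 ((memLp_indicator_iff_restrict hU.measurableSet).2
    (hv.memLp_restrict_fderiv e))
  filter_upwards [ae_fderiv_apply_eq_zero_of_eq_zero μ hv.continuous.measurable e] with x hx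
  by_cases hxU : x ∈ U
  · rw [indicator_of_mem hxU]
  · rw [indicator_of_notMem hxU, hx (hv.eq_zero x hxU)]

theorem exists_testFun_dominatedTendsto [μ.IsAddHaarMeasure] (hv : FiniteEnergy U μ v)
    (hU : IsOpen U) : ∃ w : ℕ → E → ℝ, (∀ n, TestFun U (w n)) ∧ DominatedTendsto w v μ ∧
      ∀ e, DominatedTendsto (fun n x => fderiv ℝ (w n) x e) (fun x => fderiv ℝ v x e) μ := by
  let ε (n : ℕ) : ℝ := 1 / (n + 1)
  have hε (n : ℕ) : ε n ∈ Ioc (0 : ℝ) 1 :=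
    ⟨Nat.one_div_pos_of_nat, div_le_one_of_le₀ (by simp) (by positivity)⟩
  have hlim : Tendsto ε atTop (𝓝[>] 0) := tendsto_nhdsWithin_iff.2
    ⟨tendsto_one_div_add_atTop_nhds_zero_nat, .of_forall fun n => (hε n).1⟩
  have htest (n : ℕ) := hv.testFun_dilatedBump_mul_smoothTrunc hU (hε n).1
  refine ⟨fun n => dilatedBump E (ε n) * (smoothTrunc (ε n) ∘ v), htest,
    ⟨fun n => (htest n).continuous.aestronglyMeasurable,
      .of_forall fun x => (tendsto_dilatedBump_mul_smoothTrunc v x).comp hlim,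
      fun x => |v x|, hv.memLp.abs, fun n x => ?_⟩, fun e => ?_⟩
  · simp only [Pi.mul_apply, Function.comp_apply, abs_mul]
    exact (mul_le_of_le_one_left (abs_nonneg _) (abs_dilatedBump_le_one _ x)).trans
      (abs_smoothTrunc_le _ _)
  · obtain ⟨C, hC⟩ := hv.exists_abs_fderiv_le hU e
    refine ⟨fun n => ((htest n).continuous_fderiv_apply e).aestronglyMeasurable, ?_, _,
      (((hv.memLp_fderiv hU e).abs.add hv.memLp.abs).const_mul C), fun n x => hC _ (hε n) x⟩
    filter_upwards [hv.ae_tendsto_fderiv hU e] with x hx using hx.comp hlim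

end FiniteEnergy

/-! ### The variational inequality for `λ₁(Γ)` -/

theorem gradSq2_nonneg (u : ℝ × ℝ → ℝ) (p : ℝ × ℝ) : 0 ≤ gradSq2 u p := by
  unfold gradSq2
  positivity

theorem TestFun.integrable_gradSq2 {U : Set (ℝ × ℝ)} {g : ℝ × ℝ → ℝ} (hg : TestFun U g) :
    Integrable (gradSq2 g) :=
  (hg.integrable_fderiv_apply_sq _).add (hg.integrable_fderiv_apply_sq _)

theorem lamG_nonneg : 0 ≤ lamG := by
  refine Real.sInf_nonneg ?_
  rintro r ⟨u, -, -, -, -, rfl⟩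
  exact div_nonneg (integral_nonneg (gradSq2_nonneg u)) (integral_nonneg fun p => sq_nonneg _)

theorem lamG_mul_integral_sq_le {g : ℝ × ℝ → ℝ} (hg : TestFun Gam g) :
    lamG * ∫ p, g p ^ 2 ≤ ∫ p, gradSq2 g p := by
  have hsq : ∫ p in Gam, g p ^ 2 = ∫ p, g p ^ 2 :=
    setIntegral_eq_integral_of_forall_compl_eq_zero fun p hp => by simp [hg.eq_zero hp]
  have hgrad : ∫ p in Gam, gradSq2 g p = ∫ p, gradSq2 g p :=
    setIntegral_eq_integral_of_forall_compl_eq_zero fun p hp => by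
      simp [gradSq2, hg.fderiv_eq_zero hp]
  have hnonneg : 0 ≤ ∫ p, g p ^ 2 := integral_nonneg fun p => sq_nonneg (g p)
  obtain h0 | hpos := hnonneg.eq_or_lt
  · rw [← h0]
    simpa using integral_nonneg (gradSq2_nonneg g)
  rw [← le_div_iff₀ hpos, ← hsq, ← hgrad]
  refine csInf_le ⟨0, ?_⟩ ⟨g, hg.contDiff, hg.hasCompactSupport, hg.tsupport_subset, ?_, rfl⟩
  · rintro r ⟨u, -, -, -, -, rfl⟩
    exact div_nonneg (integral_nonneg (gradSq2_nonneg u)) (integral_nonneg fun p => sq_nonneg _)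
  · exact hsq ▸ hpos.ne'

/-! ### The spectral gap `λ₁(Γ) < π²` -/

namespace TestFun

variable {E F : Type*} [NormedAddCommGroup E] [NormedSpace ℝ E] [NormedAddCommGroup F]
  [NormedSpace ℝ F] {U : Set E} {V : Set F} {f g : E → ℝ} {h : F → ℝ}

theorem add (hf : TestFun U f) (hg : TestFun U g) : TestFun U (f + g) :=
  ⟨hf.contDiff.add hg.contDiff, hf.hasCompactSupport.add hg.hasCompactSupport,
    (tsupport_add f g).trans (union_subset hf.tsupport_subset hg.tsupport_subset)⟩

theorem prod_mul (hf : TestFun U f) (hh : TestFun V h) :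
    TestFun (U ×ˢ V) fun p => f p.1 * h p.2 := by
  have hsupp : tsupport (fun p : E × F => f p.1 * h p.2) ⊆ tsupport f ×ˢ tsupport h :=
    closure_minimal (fun p hp => ⟨subset_closure (left_ne_zero_of_mul hp),
      subset_closure (right_ne_zero_of_mul hp)⟩)
      ((isClosed_tsupport f).prod (isClosed_tsupport h))
  exact ⟨(hf.contDiff.comp contDiff_fst).mul (hh.contDiff.comp contDiff_snd),
    (hf.hasCompactSupport.isCompact.prod hh.hasCompactSupport.isCompact).of_isClosed_subset
      (isClosed_tsupport _) hsupp,
    hsupp.trans (prod_mono hf.tsupport_subset hh.tsupport_subset)⟩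

theorem fderiv_prod_mul (hf : TestFun U f) (hh : TestFun V h) (p e : E × F) :
    fderiv ℝ (fun p : E × F => f p.1 * h p.2) p e =
      fderiv ℝ f p.1 e.1 * h p.2 + f p.1 * fderiv ℝ h p.2 e.2 := by
  have h₁ := (hf.differentiableAt p.1).hasFDerivAt.comp p hasFDerivAt_fst
  have h₂ := (hh.differentiableAt p.2).hasFDerivAt.comp p hasFDerivAt_snd
  have h₁₂ : HasFDerivAt (fun p : E × F => f p.1 * h p.2) _ p := h₁.mul h₂
  simp [h₁₂.fderiv]
  ring

theorem memLp [MeasurableSpace E] [OpensMeasurableSpace E] {μ : Measure E}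
    [IsFiniteMeasureOnCompacts μ] (hf : TestFun U f) : MemLp f 2 μ :=
  hf.continuous.memLp_of_hasCompactSupport hf.hasCompactSupport

theorem memLp_fderiv_apply [MeasurableSpace E] [OpensMeasurableSpace E] {μ : Measure E}
    [IsFiniteMeasureOnCompacts μ] (hf : TestFun U f) (e : E) :
    MemLp (fun x => fderiv ℝ f x e) 2 μ :=
  (hf.continuous_fderiv_apply e).memLp_of_hasCompactSupport (hf.hasCompactSupport_fderiv_apply e)

end TestFun

theorem integral_prod_mul_add_mul_sq {α β : Type*} [MeasurableSpace α] [MeasurableSpace β]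
    {μ : Measure α} {ν : Measure β} [SFinite μ] [SFinite ν] {f₁ f₂ : α → ℝ} {g₁ g₂ : β → ℝ}
    (hf₁ : MemLp f₁ 2 μ) (hf₂ : MemLp f₂ 2 μ) (hg₁ : MemLp g₁ 2 ν) (hg₂ : MemLp g₂ 2 ν) :
    ∫ p, (f₁ p.1 * g₁ p.2 + f₂ p.1 * g₂ p.2) ^ 2 ∂μ.prod ν =
      (∫ x, f₁ x ^ 2 ∂μ) * (∫ y, g₁ y ^ 2 ∂ν) +
        2 * ((∫ x, f₁ x * f₂ x ∂μ) * ∫ y, g₁ y * g₂ y ∂ν) +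
        (∫ x, f₂ x ^ 2 ∂μ) * ∫ y, g₂ y ^ 2 ∂ν := by
  rw [← integral_prod_mul, ← integral_prod_mul, ← integral_prod_mul, ← integral_const_mul,
    ← integral_add, ← integral_add]
  · congr with p
    ring
  · exact (hf₁.integrable_sq.mul_prod hg₁.integrable_sq).add
      (((hf₁.integrable_mul hf₂).mul_prod (hg₁.integrable_mul hg₂)).const_mul 2)
  · exact hf₂.integrable_sq.mul_prod hg₂.integrable_sq
  · exact hf₁.integrable_sq.mul_prod hg₁.integrable_sq
  · exact ((hf₁.integrable_mul hf₂).mul_prod (hg₁.integrable_mul hg₂)).const_mul 2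

theorem lamG_mul_le_of_testFun {a s : ℝ → ℝ} (ha : TestFun (Ioi (-1)) a)
    (hs : TestFun (Ioo (-1) 0) s) :
    lamG * ((∫ x, a x ^ 2) * (∫ x, s x ^ 2) + (∫ x, a x * s x) ^ 2) ≤
      (∫ x, deriv a x ^ 2) * (∫ x, s x ^ 2) + (∫ x, a x ^ 2) * (∫ x, deriv s x ^ 2) +
        2 * ((∫ x, a x * s x) * ∫ x, deriv a x * deriv s x) := by
  have ha' : MemLp (deriv a) 2 := ha.memLp_fderiv_apply 1
  have hs' : MemLp (deriv s) 2 := hs.memLp_fderiv_apply 1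
  have has := (ha.prod_mul hs).mono (V := Gam) fun p ⟨h₁, h₂, h₂'⟩ =>
    ⟨lt_min h₁ h₂, min_lt_of_right_lt h₂'⟩
  have hsa := (hs.prod_mul ha).mono (V := Gam) fun p ⟨⟨h₁, h₁'⟩, h₂⟩ =>
    ⟨lt_min h₁ h₂, min_lt_of_left_lt h₁'⟩
  have hderiv (p e : ℝ × ℝ) :
      fderiv ℝ ((fun p => a p.1 * s p.2) + fun p => s p.1 * a p.2) p e =
        fderiv ℝ a p.1 e.1 * s p.2 + a p.1 * fderiv ℝ s p.2 e.2 +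
          (fderiv ℝ s p.1 e.1 * a p.2 + s p.1 * fderiv ℝ a p.2 e.2) := by
    rw [fderiv_add (has.differentiableAt p) (hsa.differentiableAt p), add_apply,
      ha.fderiv_prod_mul hs, hs.fderiv_prod_mul ha]
  have hkey := lamG_mul_integral_sq_le (has.add hsa)
  unfold gradSq2 at hkey
  rw [integral_add ((has.add hsa).integrable_fderiv_apply_sq _)
    ((has.add hsa).integrable_fderiv_apply_sq _)] at hkey
  simp only [hderiv, map_zero, mul_zero, zero_mul, add_zero, zero_add, fderiv_apply_one_eq_deriv,
    Pi.add_apply] at hkey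
  rw [Measure.volume_eq_prod, integral_prod_mul_add_mul_sq ha.memLp hs.memLp hs.memLp ha.memLp,
    integral_prod_mul_add_mul_sq ha' hs' hs.memLp ha.memLp,
    integral_prod_mul_add_mul_sq ha.memLp hs.memLp hs' ha'] at hkey
  simp only [mul_comm (s _), mul_comm (deriv s _)] at hkey
  linarith

theorem lamG_mul_le_of_finiteEnergy {b : ℝ} {a s : ℝ → ℝ}
    (ha : FiniteEnergy (Ioo (-1) b) volume a) (hs : FiniteEnergy (Ioo (-1) 0) volume s) :
    lamG * ((∫ x, a x ^ 2) * (∫ x, s x ^ 2) + (∫ x, a x * s x) ^ 2) ≤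
      (∫ x, deriv a x ^ 2) * (∫ x, s x ^ 2) + (∫ x, a x ^ 2) * (∫ x, deriv s x ^ 2) +
        2 * ((∫ x, a x * s x) * ∫ x, deriv a x * deriv s x) := by
  obtain ⟨v, hv, hva, hva'⟩ := ha.exists_testFun_dominatedTendsto isOpen_Ioo
  obtain ⟨w, hw, hws, hws'⟩ := hs.exists_testFun_dominatedTendsto isOpen_Ioo
  replace hva' : DominatedTendsto (fun n => deriv (v n)) (deriv a) volume := hva' 1
  replace hws' : DominatedTendsto (fun n => deriv (w n)) (deriv s) volume := hws' 1
  exact le_of_tendsto_of_tendsto'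
    (((hva.integral_sq.mul hws.integral_sq).add ((hva.integral_mul hws).pow 2)).const_mul lamG)
    (((hva'.integral_sq.mul hws.integral_sq).add (hva.integral_sq.mul hws'.integral_sq)).add
      (((hva.integral_mul hws).mul (hva'.integral_mul hws')).const_mul 2))
    fun n => lamG_mul_le_of_testFun ((hv n).mono fun x hx => hx.1) (hw n)

theorem fderiv_indicator_of_isOpen {E : Type*} [NormedAddCommGroup E] [NormedSpace ℝ E] {U : Set E}
    (hU : IsOpen U) (f : E → ℝ) {x : E} (hx : x ∈ U) :
    fderiv ℝ (U.indicator f) x = fderiv ℝ f x :=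
  (eqOn_indicator.eventuallyEq_of_mem (hU.mem_nhds hx)).fderiv_eq

theorem FiniteEnergy.indicator_Ioo {l r : ℝ} {f : ℝ → ℝ} (hlr : l < r) (hf : ContDiff ℝ 1 f)
    (hl : f l = 0) (hr : f r = 0) : FiniteEnergy (Ioo l r) volume ((Ioo l r).indicator f) := by
  have hcont : Continuous ((Ioo l r).indicator f) := hf.continuous.indicator fun x hx => by
    obtain rfl | rfl : x = l ∨ x = r := by simpa [frontier_Ioo hlr] using hx
    exacts [hl, hr]
  refine ⟨hcont, fun x hx => indicator_of_notMem hx f, hf.contDiffOn.congr eqOn_indicator,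
    hcont.memLp_of_hasCompactSupport (HasCompactSupport.intro isCompact_Icc fun x hx =>
      indicator_of_notMem (fun h => hx (Ioo_subset_Icc_self h)) f), fun e => ?_⟩
  have hcont' : Continuous fun x => fderiv ℝ f x e :=
    (hf.continuous_fderiv one_ne_zero).clm_apply continuous_const
  refine MemLp.ae_eq ?_ ((memLp_two_iff_integrable_sq hcont'.aestronglyMeasurable).2
    ((hcont'.pow 2).integrableOn_Icc.mono_set Ioo_subset_Icc_self))
  filter_upwards [ae_restrict_mem measurableSet_Ioo] with x hx
  rw [fderiv_indicator_of_isOpen isOpen_Ioo f hx]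

theorem deriv_indicator_Ioo_ae_eq (l r : ℝ) (f : ℝ → ℝ) :
    deriv ((Ioo l r).indicator f) =ᵐ[volume] (Ioo l r).indicator (deriv f) := by
  filter_upwards [Countable.ae_notMem (toFinite {l, r}).countable volume] with x hx
  by_cases hxI : x ∈ Ioo l r
  · rw [indicator_of_mem hxI]
    exact DFunLike.congr_fun (fderiv_indicator_of_isOpen isOpen_Ioo f hxI) 1
  · have hxIcc : x ∉ Icc l r := fun h => by
      grind [eq_endpoints_or_mem_Ioo_of_mem_Icc h]
    rw [indicator_of_notMem hxI]
    have : (Ioo l r).indicator f =ᶠ[𝓝 x] 0 := by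
      filter_upwards [isClosed_Icc.isOpen_compl.mem_nhds hxIcc] with y hy
        using indicator_of_notMem (fun h => hy (Ioo_subset_Icc_self h)) f
    simp [this.deriv_eq]

theorem integral_indicator_Ioo_mul {l r r' : ℝ} (hlr : l ≤ r) (hrr' : r ≤ r') (f g : ℝ → ℝ) :
    ∫ x, (Ioo l r').indicator f x * (Ioo l r).indicator g x = ∫ x in l..r, f x * g x := by
  rw [intervalIntegral.integral_of_le hlr, integral_Ioc_eq_integral_Ioo,
    ← integral_indicator measurableSet_Ioo]
  congr with x
  rw [← inter_indicator_mul, inter_eq_right.2 (Ioo_subset_Ioo_right hrr')]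

theorem integral_deriv_indicator_Ioo_mul {l r r' : ℝ} (hlr : l ≤ r) (hrr' : r ≤ r')
    (f g : ℝ → ℝ) : ∫ x, deriv ((Ioo l r').indicator f) x * deriv ((Ioo l r).indicator g) x =
      ∫ x in l..r, deriv f x * deriv g x := by
  rw [← integral_indicator_Ioo_mul hlr hrr']
  exact integral_congr_ae ((deriv_indicator_Ioo_ae_eq l r' f).mul (deriv_indicator_Ioo_ae_eq l r g))

theorem lamG_mul_le {b : ℝ} {a s : ℝ → ℝ} (hb : 0 ≤ b) (ha : ContDiff ℝ 1 a)
    (hs : ContDiff ℝ 1 s) (ha₁ : a (-1) = 0) (hab : a b = 0) (hs₁ : s (-1) = 0) (hs₀ : s 0 = 0) :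
    lamG * ((∫ x in (-1)..b, a x ^ 2) * (∫ x in (-1)..0, s x ^ 2) +
        (∫ x in (-1)..0, a x * s x) ^ 2) ≤
      (∫ x in (-1)..b, deriv a x ^ 2) * (∫ x in (-1)..0, s x ^ 2) +
        (∫ x in (-1)..b, a x ^ 2) * (∫ x in (-1)..0, deriv s x ^ 2) +
        2 * ((∫ x in (-1)..0, a x * s x) * ∫ x in (-1)..0, deriv a x * deriv s x) := by
  have h := lamG_mul_le_of_finiteEnergy (FiniteEnergy.indicator_Ioo (by linarith) ha ha₁ hab)
    (FiniteEnergy.indicator_Ioo (by norm_num) hs hs₁ hs₀)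
  have hb' : (-1 : ℝ) ≤ b := by linarith
  have h₀ : (-1 : ℝ) ≤ 0 := by norm_num
  simpa only [sq, integral_indicator_Ioo_mul hb' le_rfl, integral_indicator_Ioo_mul h₀ hb,
    integral_indicator_Ioo_mul h₀ le_rfl, integral_deriv_indicator_Ioo_mul hb' le_rfl,
    integral_deriv_indicator_Ioo_mul h₀ hb, integral_deriv_indicator_Ioo_mul h₀ le_rfl] using h

/-- The profile of the trial function for `λ₁(Γ) < π²` along a branch of the guide: it vanishes at
`-1` and `6`, and is close to `x + 1` on `[-1, 0]`. -/
def branchProfile (x : ℝ) : ℝ := (x + 1) * (1 - (x + 1) / 7) ^ 2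

theorem contDiff_branchProfile : ContDiff ℝ 1 branchProfile := by
  unfold branchProfile
  fun_prop

theorem branchProfile_mem_Icc {x : ℝ} (hx : x ∈ Icc (-1) 0) :
    branchProfile x ∈ Icc (36 / 49 * (x + 1)) (x + 1) := by
  obtain ⟨h₁, h₀⟩ := hx
  have hx₁ : 0 ≤ x + 1 := by linarith
  refine ⟨?_, mul_le_of_le_one_right hx₁ (pow_le_one₀ (by linarith) (by linarith))⟩
  rw [branchProfile, mul_comm]
  gcongr
  nlinarith

theorem hasDerivAt_branchProfile (x : ℝ) :
    HasDerivAt branchProfile ((1 - (x + 1) / 7) * (1 - 3 * (x + 1) / 7)) x := by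
  have h : HasDerivAt (fun x : ℝ => x + 1) 1 x := (hasDerivAt_id x).add_const 1
  refine (h.mul (((h.div_const 7).const_sub 1).pow 2)).congr_deriv ?_
  simp
  ring

theorem integral_deriv_branchProfile_sq : ∫ x in (-1)..6, deriv branchProfile x ^ 2 = 14 / 15 := by
  simp_rw [(hasDerivAt_branchProfile _).deriv]
  have h (x : ℝ) : HasDerivAt (fun x : ℝ => (x + 1) / 7) (1 / 7) x :=
    ((hasDerivAt_id x).add_const 1).div_const 7
  have hF (x : ℝ) := (((((h x).sub (((h x).pow 2).const_mul 4)).add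
    (((h x).pow 3).const_mul (22 / 3))).sub (((h x).pow 4).const_mul 6)).add
    (((h x).pow 5).const_mul (9 / 5))).const_mul 7
  rw [intervalIntegral.integral_eq_sub_of_hasDerivAt (fun x _ => (hF x).congr_deriv ?_)
    (Continuous.intervalIntegrable (by fun_prop) _ _)]
  · simp
    norm_num
  · simp
    ring

theorem hasDerivAt_sin_pi_mul (x : ℝ) : HasDerivAt (fun x => sin (π * x)) (π * cos (π * x)) x := by
  simpa [mul_comm] using ((hasDerivAt_id x).const_mul π).sin

theorem hasDerivAt_cos_pi_mul (x : ℝ) : HasDerivAt (fun x => cos (π * x)) (-π * sin (π * x)) x := by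
  simpa [mul_comm] using ((hasDerivAt_id x).const_mul π).cos

theorem integral_sin_pi_mul_sq : ∫ x in (-1)..0, sin (π * x) ^ 2 = 1 / 2 := by
  rw [intervalIntegral.integral_comp_mul_left (fun x => sin x ^ 2) pi_ne_zero, integral_sin_sq]
  simp
  field_simp

theorem integral_pi_mul_cos_pi_mul_sq : ∫ x in (-1)..0, (π * cos (π * x)) ^ 2 = π ^ 2 / 2 := by
  simp_rw [mul_pow]
  rw [intervalIntegral.integral_const_mul,
    intervalIntegral.integral_comp_mul_left (fun x => cos x ^ 2) pi_ne_zero, integral_cos_sq]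
  simp
  field_simp

theorem integral_deriv_mul_pi_mul_cos {a : ℝ → ℝ} (ha : ContDiff ℝ 1 a) (ha₁ : a (-1) = 0) :
    ∫ x in (-1)..0, deriv a x * (π * cos (π * x)) =
      π * a 0 + π ^ 2 * ∫ x in (-1)..0, a x * sin (π * x) := by
  have hcont : Continuous (deriv a) := ha.continuous_deriv le_rfl
  have hparts := intervalIntegral.integral_mul_deriv_eq_deriv_mul (a := -1) (b := 0)
    (fun x _ => (hasDerivAt_cos_pi_mul x).const_mul π)
    (fun x _ => (ha.differentiable one_ne_zero x).hasDerivAt)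
    (Continuous.intervalIntegrable (by fun_prop) _ _) (hcont.intervalIntegrable _ _)
  have hsin : ∫ x in (-1)..0, π * (-π * sin (π * x)) * a x =
      -π ^ 2 * ∫ x in (-1)..0, a x * sin (π * x) := by
    rw [← intervalIntegral.integral_const_mul]
    congr with x
    ring
  simp_rw [mul_comm (deriv a _)]
  rw [hparts, hsin, ha₁]
  simp

theorem integral_add_one_mul_neg_pi_mul_sin :
    ∫ x in (-1)..0, (x + 1) * (-π * sin (π * x)) = 1 := by
  have hparts := intervalIntegral.integral_mul_deriv_eq_deriv_mul (a := -1) (b := 0)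
    (fun x _ => (hasDerivAt_id x).add_const (1 : ℝ)) (fun x _ => hasDerivAt_cos_pi_mul x)
    (Continuous.intervalIntegrable (by fun_prop) _ _)
    (Continuous.intervalIntegrable (by fun_prop) _ _)
  simpa [intervalIntegral.integral_comp_mul_left cos pi_ne_zero] using hparts

theorem neg_pi_mul_integral_branchProfile_mul_sin_mem_Icc :
    -π * ∫ x in (-1)..0, branchProfile x * sin (π * x) ∈ Icc (36 / 49) 1 := by
  have hsin {x : ℝ} (hx : x ∈ Icc (-1) 0) : 0 ≤ -π * sin (π * x) :=
    mul_nonneg_of_nonpos_of_nonpos (neg_nonpos.2 pi_pos.le) <|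
      sin_nonpos_of_nonpos_of_neg_pi_le (by nlinarith [pi_pos, hx.2]) (by nlinarith [pi_pos, hx.1])
  have hcont : Continuous branchProfile := contDiff_branchProfile.continuous
  rw [← intervalIntegral.integral_const_mul]
  simp_rw [mul_left_comm (-π)]
  constructor
  · rw [show (36 / 49 : ℝ) = ∫ x in (-1)..0, 36 / 49 * ((x + 1) * (-π * sin (π * x))) by
      rw [intervalIntegral.integral_const_mul, integral_add_one_mul_neg_pi_mul_sin, mul_one]]
    refine intervalIntegral.integral_mono_on (by norm_num) ?_ ?_ fun x hx => ?_
    · exact Continuous.intervalIntegrable (by fun_prop) _ _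
    · exact Continuous.intervalIntegrable (by fun_prop) _ _
    · rw [← mul_assoc]
      exact mul_le_mul_of_nonneg_right (branchProfile_mem_Icc hx).1 (hsin hx)
  · refine (intervalIntegral.integral_mono_on (by norm_num) ?_ ?_ fun x hx =>
      mul_le_mul_of_nonneg_right (branchProfile_mem_Icc hx).2 (hsin hx)).trans_eq
        integral_add_one_mul_neg_pi_mul_sin
    all_goals exact Continuous.intervalIntegrable (by fun_prop) _ _

theorem lamG_lt_pi_sq : lamG < π ^ 2 := by
  by_contra! hpi
  have hdsin : deriv (fun x => sin (π * x)) = fun x => π * cos (π * x) :=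
    funext fun x => (hasDerivAt_sin_pi_mul x).deriv
  have h := lamG_mul_le (b := 6) (s := fun x => sin (π * x)) (by norm_num) contDiff_branchProfile
    (by fun_prop) (by simp [branchProfile]) (by norm_num [branchProfile]) (by simp) (by simp)
  rw [hdsin, integral_deriv_mul_pi_mul_cos contDiff_branchProfile (by simp [branchProfile]),
    integral_deriv_branchProfile_sq, integral_sin_pi_mul_sq, integral_pi_mul_cos_pi_mul_sq,
    show branchProfile 0 = 36 / 49 by norm_num [branchProfile]] at h
  have hA : 0 ≤ ∫ x in (-1)..6, branchProfile x ^ 2 :=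
    intervalIntegral.integral_nonneg (by norm_num) fun x _ => sq_nonneg _
  obtain ⟨hy₁, hy₂⟩ := neg_pi_mul_integral_branchProfile_mul_sin_mem_Icc
  set A := ∫ x in (-1)..6, branchProfile x ^ 2
  set m := ∫ x in (-1)..0, branchProfile x * sin (π * x)
  have hmono : π ^ 2 * (A * (1 / 2) + m ^ 2) ≤ lamG * (A * (1 / 2) + m ^ 2) := by gcongr
  nlinarith [mul_nonneg (sub_nonneg.2 hy₁) (sub_nonneg.2 hy₂)]

/-! ### Truncation of the broken guide -/

theorem omega_pos : 0 < omega := Real.sqrt_pos.2 (sub_pos.2 lamG_lt_pi_sq)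

theorem omega_sq : omega ^ 2 = π ^ 2 - lamG := Real.sq_sqrt (sub_pos.2 lamG_lt_pi_sq).le

/-- The length beyond which the error made by `guideCutoff` is absorbed by the spectral gap
`ω² = π² - λ₁(Γ)`. -/
def cornerRadius : ℝ := 8 / omega

/-- The constant `K` for which truncating the guide at distance `L` costs `K / L ^ 4`. -/
def truncationConst : ℝ := 64 * cornerRadius ^ 2

theorem cornerRadius_pos : 0 < cornerRadius := div_pos (by norm_num) omega_pos

theorem truncationConst_nonneg : 0 ≤ truncationConst := by
  unfold truncationConst
  positivity

theorem hasDerivAt_max_zero_sq (y : ℝ) : HasDerivAt (fun y => max 0 y ^ 2) (2 * max 0 y) y := by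
  refine hasDerivAt_of_hasDerivAt_of_ne' (f := fun y => max 0 y ^ 2) (g := fun y => 2 * max 0 y)
    (x := 0) (fun y hy => ?_) (by fun_prop) (by fun_prop) y
  rcases hy.lt_or_gt with hneg | hpos
  · rw [max_eq_left hneg.le, mul_zero]
    refine (hasDerivAt_const y (0 : ℝ)).congr_of_eventuallyEq ?_
    filter_upwards [Iio_mem_nhds hneg] with z hz
    simp [(mem_Iio.1 hz).le]
  · rw [max_eq_right hpos.le]
    refine ((hasDerivAt_pow 2 y).congr_of_eventuallyEq ?_).congr_deriv (by simp)
    filter_upwards [Ioi_mem_nhds hpos] with z hz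
    simp [(mem_Ioi.1 hz).le]

/-- The cutoff `(1 - (t₊ / L) ^ 4)₊ ^ 2`, equal to `1` for `t ≤ 0` and to `0` for `t ≥ L`. The
quartic makes its derivative comparable with `1 - χ ^ 2` away from the corner. -/
def guideCutoff (L t : ℝ) : ℝ := max 0 (1 - (max 0 t ^ 2) ^ 2 / L ^ 4) ^ 2

theorem hasDerivAt_guideCutoff (L t : ℝ) :
    HasDerivAt (guideCutoff L)
      (2 * max 0 (1 - (max 0 t ^ 2) ^ 2 / L ^ 4) * -(4 * max 0 t ^ 3 / L ^ 4)) t := by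
  have hinner := (((hasDerivAt_max_zero_sq t).pow 2).div_const (L ^ 4)).const_sub 1
  refine ((hasDerivAt_max_zero_sq _).comp t hinner).congr_deriv ?_
  simp only [Pi.pow_apply]
  push_cast
  ring

theorem contDiff_guideCutoff (L : ℝ) : ContDiff ℝ 1 (guideCutoff L) := by
  refine contDiff_one_iff_deriv.2 ⟨fun t => (hasDerivAt_guideCutoff L t).differentiableAt, ?_⟩
  rw [funext fun t => (hasDerivAt_guideCutoff L t).deriv]
  fun_prop

theorem guideCutoff_mem_Icc (L t : ℝ) : guideCutoff L t ∈ Icc 0 1 := by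
  refine ⟨sq_nonneg _, pow_le_one₀ (le_max_left _ _) (max_le zero_le_one ?_)⟩
  linarith [show 0 ≤ (max 0 t ^ 2) ^ 2 / L ^ 4 by positivity]

theorem guideCutoff_of_nonpos (L : ℝ) {t : ℝ} (ht : t ≤ 0) : guideCutoff L t = 1 := by
  simp [guideCutoff, ht]

theorem deriv_guideCutoff_of_nonpos (L : ℝ) {t : ℝ} (ht : t ≤ 0) :
    deriv (guideCutoff L) t = 0 := by
  simp [(hasDerivAt_guideCutoff L t).deriv, ht]

theorem one_le_max_zero_pow_div {L t : ℝ} (hL : 0 < L) (ht : L ≤ t) :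
    1 ≤ (max 0 t ^ 2) ^ 2 / L ^ 4 := by
  rw [max_eq_right (hL.le.trans ht), one_le_div (by positivity), ← pow_mul]
  exact pow_le_pow_left₀ hL.le ht 4

theorem guideCutoff_of_le {L t : ℝ} (hL : 0 < L) (ht : L ≤ t) : guideCutoff L t = 0 := by
  simp [guideCutoff, one_le_max_zero_pow_div hL ht]

theorem deriv_guideCutoff_of_le {L t : ℝ} (hL : 0 < L) (ht : L ≤ t) :
    deriv (guideCutoff L) t = 0 := by
  simp [(hasDerivAt_guideCutoff L t).deriv, one_le_max_zero_pow_div hL ht]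

/-- The error of the cutoff at distance `L`, localised near the corner. -/
def truncationError (L t : ℝ) : ℝ := if t < cornerRadius then truncationConst / L ^ 4 else 0

theorem truncationError_nonneg {L : ℝ} (t : ℝ) : 0 ≤ truncationError L t := by
  unfold truncationError
  split_ifs
  · exact div_nonneg truncationConst_nonneg (by positivity)
  · exact le_rfl

theorem sixtyfour_mul_le_truncationError {L t s : ℝ} (hs : s = (max 0 t ^ 2) ^ 2 / L ^ 4) :
    64 * (max 0 t ^ 2 * s / L ^ 4) ≤ s * (omega ^ 2 * s + truncationError L t) := by
  have hs₀ : 0 ≤ s := hs ▸ by positivity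
  unfold truncationError
  split_ifs with ht
  · have hm : max 0 t ^ 2 ≤ cornerRadius ^ 2 :=
      pow_le_pow_left₀ (le_max_left _ _) (max_le cornerRadius_pos.le ht.le) 2
    calc 64 * (max 0 t ^ 2 * s / L ^ 4) ≤ 64 * (cornerRadius ^ 2 * s / L ^ 4) := by gcongr
      _ = s * (0 + truncationConst / L ^ 4) := by unfold truncationConst; ring
      _ ≤ s * (omega ^ 2 * s + truncationConst / L ^ 4) := by gcongr; positivity
  · have hm : 8 ≤ max 0 t * omega :=
      (div_le_iff₀ omega_pos).1 ((not_lt.1 ht).trans (le_max_right 0 t))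
    calc 64 * (max 0 t ^ 2 * s / L ^ 4) = 8 ^ 2 * (max 0 t ^ 2 * s / L ^ 4) := by norm_num
      _ ≤ (max 0 t * omega) ^ 2 * (max 0 t ^ 2 * s / L ^ 4) := by gcongr
      _ = s * (omega ^ 2 * s + 0) := by rw [hs]; ring

theorem deriv_guideCutoff_sq_le {L : ℝ} (hL : 0 < L) (t : ℝ) :
    deriv (guideCutoff L) t ^ 2 ≤ (1 - guideCutoff L t ^ 2) *
      (omega ^ 2 * (1 - guideCutoff L t ^ 2) + truncationError L t) := by
  rw [(hasDerivAt_guideCutoff L t).deriv, guideCutoff]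
  set m := max 0 t
  set s := (m ^ 2) ^ 2 / L ^ 4 with hs
  have hs₀ : 0 ≤ s := by positivity
  have hε := truncationError_nonneg (L := L) t
  rcases le_total 1 s with hs₁ | hs₁
  · rw [max_eq_left (by linarith : 1 - s ≤ 0)]
    norm_num
    positivity
  rw [max_eq_right (by linarith : 0 ≤ 1 - s)]
  have hdsq : (4 * m ^ 3 / L ^ 4) ^ 2 = 16 * (m ^ 2 * s / L ^ 4) := by
    rw [hs]
    field_simp
    ring
  have hle : (2 * (1 - s) * -(4 * m ^ 3 / L ^ 4)) ^ 2 ≤ 64 * (m ^ 2 * s / L ^ 4) := by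
    have : (1 - s) ^ 2 ≤ 1 := pow_le_one₀ (by linarith) (by linarith)
    nlinarith [mul_le_mul_of_nonneg_right this (sq_nonneg (4 * m ^ 3 / L ^ 4))]
  have hsD : s ≤ 1 - ((1 - s) ^ 2) ^ 2 := by
    have : (1 - s) ^ 3 ≤ 1 := pow_le_one₀ (by linarith) (by linarith)
    nlinarith
  have hbound := sixtyfour_mul_le_truncationError (t := t) hs
  exact hle.trans (hbound.trans (mul_le_mul hsD (by gcongr) (by positivity) (hs₀.trans hsD)))

/-- Multiplied by `1 - χ ^ 2`, the difference of the two sides is the square of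
`(1 - χ ^ 2) * gy - χ * χ' * g` plus a nonnegative multiple of `g ^ 2`. -/
theorem cutoff_form_le {χ χ' gx gy g ε : ℝ} (hχ : χ ∈ Icc 0 1) (hε : 0 ≤ ε)
    (h : χ' ^ 2 ≤ (1 - χ ^ 2) * (omega ^ 2 * (1 - χ ^ 2) + ε)) :
    (χ * gy + χ' * g) ^ 2 + (χ * gx) ^ 2 - lamG * (χ * g) ^ 2 ≤
      gx ^ 2 + gy ^ 2 - lamG * g ^ 2 + ε * g ^ 2 - (1 - χ ^ 2) * (gx ^ 2 - π ^ 2 * g ^ 2) := by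
  have hD : 0 ≤ 1 - χ ^ 2 := sub_nonneg.2 (pow_le_one₀ hχ.1 hχ.2)
  rw [omega_sq] at h
  rcases hD.eq_or_lt with h0 | hpos
  · have hχ' : χ' = 0 := by
      rw [← h0, zero_mul] at h
      exact pow_eq_zero_iff two_ne_zero |>.1 (le_antisymm h (sq_nonneg χ'))
    have hχ₁ : χ = 1 := by nlinarith [hχ.1]
    subst hχ' hχ₁
    linarith [mul_nonneg hε (sq_nonneg g)]
  · refine le_of_sub_nonneg (nonneg_of_mul_nonneg_right ?_ hpos)
    calc 0 ≤ ((1 - χ ^ 2) * gy - χ * χ' * g) ^ 2 +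
          ((1 - χ ^ 2) * ((π ^ 2 - lamG) * (1 - χ ^ 2) + ε) - χ' ^ 2) * g ^ 2 :=
        add_nonneg (sq_nonneg _) (mul_nonneg (sub_nonneg.2 h) (sq_nonneg g))
      _ = _ := by ring

/-- The part of the transverse energy which `guideCutoff L` discards on `t < L`. -/
def discardedWeight (L t : ℝ) : ℝ := if t < L then 1 - guideCutoff L t ^ 2 else 0

theorem measurable_discardedWeight (L : ℝ) : Measurable (discardedWeight L) :=
  Measurable.ite measurableSet_Iio
    (measurable_const.sub ((contDiff_guideCutoff L).continuous.measurable.pow_const 2))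
    measurable_const

theorem discardedWeight_mem_Icc (L t : ℝ) : discardedWeight L t ∈ Icc 0 1 := by
  have hχ := guideCutoff_mem_Icc L t
  unfold discardedWeight
  split_ifs
  · exact ⟨sub_nonneg.2 (pow_le_one₀ hχ.1 hχ.2), sub_le_self _ (sq_nonneg _)⟩
  · exact ⟨le_rfl, zero_le_one⟩

theorem discardedWeight_of_nonpos (L : ℝ) {t : ℝ} (ht : t ≤ 0) : discardedWeight L t = 0 := by
  simp [discardedWeight, guideCutoff_of_nonpos L ht]

theorem guideCutoff_form_le {L : ℝ} (hL : 0 < L) (t gx gy g : ℝ) :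
    (guideCutoff L t * gy + deriv (guideCutoff L) t * g) ^ 2 + (guideCutoff L t * gx) ^ 2 -
        lamG * (guideCutoff L t * g) ^ 2 ≤
      (if t < L then gx ^ 2 + gy ^ 2 - lamG * g ^ 2 else 0) + truncationError L t * g ^ 2 -
        discardedWeight L t * (gx ^ 2 - π ^ 2 * g ^ 2) := by
  by_cases ht : t < L
  · simp only [discardedWeight, if_pos ht]
    exact cutoff_form_le (guideCutoff_mem_Icc L t) (truncationError_nonneg t)
      (deriv_guideCutoff_sq_le hL t)
  · simp only [discardedWeight, if_neg ht, guideCutoff_of_le hL (not_lt.1 ht),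
      deriv_guideCutoff_of_le hL (not_lt.1 ht)]
    linarith [mul_nonneg (truncationError_nonneg (L := L) t) (sq_nonneg g)]

theorem TestFun.comp_equiv {E F : Type*} [NormedAddCommGroup E] [NormedSpace ℝ E]
    [NormedAddCommGroup F] [NormedSpace ℝ F] {U : Set E} {g : E → ℝ} (hg : TestFun U g)
    (e : F ≃L[ℝ] E) : TestFun (e ⁻¹' U) (g ∘ e) :=
  hg.comp e.contDiff e.toHomeomorph.isClosedEmbedding

theorem integrable_discardedWeight_mul (L : ℝ) {U : Set (ℝ × ℝ)} {g : ℝ × ℝ → ℝ}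
    (hg : TestFun U g) {t : ℝ × ℝ → ℝ} (ht : Measurable t) (e : ℝ × ℝ) :
    Integrable fun p => discardedWeight L (t p) * (fderiv ℝ g p e ^ 2 - π ^ 2 * g p ^ 2) := by
  refine ((hg.integrable_fderiv_apply_sq e).sub (hg.integrable_sq.const_mul _)).bdd_mul (c := 1)
    ((measurable_discardedWeight L).comp ht).aestronglyMeasurable (ae_of_all _ fun p => ?_)
  have hc := discardedWeight_mem_Icc L (t p)
  rw [norm_of_nonneg hc.1]
  exact hc.2

theorem integral_discardedWeight_mul_fst_nonneg (L : ℝ) {g : ℝ × ℝ → ℝ} (hg : TestFun Gam g) :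
    0 ≤ ∫ p : ℝ × ℝ, discardedWeight L p.2 * (fderiv ℝ g p (1, 0) ^ 2 - π ^ 2 * g p ^ 2) := by
  rw [Measure.volume_eq_prod,
    integral_prod_symm _ (integrable_discardedWeight_mul L hg measurable_snd (1, 0))]
  refine integral_nonneg fun y => ?_
  dsimp only [Pi.zero_apply]
  rcases le_total y 0 with hy | hy
  · simp [discardedWeight_of_nonpos L hy]
  have hsection : {x | (x, y) ∈ Gam} ⊆ Ioo (-1) 0 := fun x hx =>
    ⟨(lt_min_iff.1 hx.1).1, (min_lt_iff.1 hx.2).resolve_right hy.not_gt⟩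
  have hslice := (hg.slice_left y).mono hsection
  have hderiv (x : ℝ) : fderiv ℝ g (x, y) (1, 0) = deriv (fun x => g (x, y)) x :=
    (hg.fderiv_slice_left x 1 y).symm
  simp only [hderiv]
  rw [integral_const_mul, integral_sub hslice.integrable_deriv_sq
    (hslice.integrable_sq.const_mul _), integral_const_mul]
  exact mul_nonneg (discardedWeight_mem_Icc L y).1 (sub_nonneg.2 (wirtinger_inequality hslice))

theorem integral_discardedWeight_mul_snd_nonneg (L : ℝ) {g : ℝ × ℝ → ℝ} (hg : TestFun Gam g) :
    0 ≤ ∫ p : ℝ × ℝ, discardedWeight L p.1 * (fderiv ℝ g p (0, 1) ^ 2 - π ^ 2 * g p ^ 2) := by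
  let e : (ℝ × ℝ) ≃L[ℝ] ℝ × ℝ := ContinuousLinearEquiv.prodComm ℝ ℝ ℝ
  have hswap : TestFun Gam (g ∘ e) :=
    (hg.comp_equiv e).mono fun p hp => by simpa [Gam, e, and_comm, or_comm] using hp
  have h := integral_discardedWeight_mul_fst_nonneg L hswap
  simp only [e.comp_right_fderiv] at h
  exact h.trans_eq ((Measure.measurePreserving_swap (μ := volume) (ν := volume)).integral_comp
    MeasurableEquiv.prodComm.measurableEmbedding
    fun p : ℝ × ℝ => discardedWeight L p.1 * (fderiv ℝ g p (0, 1) ^ 2 - π ^ 2 * g p ^ 2))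

/-- The part of the plane in which both branches of the guide are cut at distance `L`. -/
def truncation (L : ℝ) : Set (ℝ × ℝ) := Iio L ×ˢ Iio L

theorem measurableSet_truncation (L : ℝ) : MeasurableSet (truncation L) :=
  measurableSet_Iio.prod measurableSet_Iio

theorem fderiv_cutoff_mul {χ : ℝ → ℝ} (hχ : ContDiff ℝ 1 χ) {g : ℝ × ℝ → ℝ} {p : ℝ × ℝ}
    (hg : DifferentiableAt ℝ g p) (e : ℝ × ℝ) :
    fderiv ℝ ((fun p : ℝ × ℝ => χ p.1 * χ p.2) * g) p e =
      χ p.1 * χ p.2 * fderiv ℝ g p e +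
        (deriv χ p.1 * e.1 * χ p.2 + χ p.1 * (deriv χ p.2 * e.2)) * g p := by
  have hd (t : ℝ) : HasDerivAt χ (deriv χ t) t := (hχ.differentiable one_ne_zero t).hasDerivAt
  have h₁ : HasFDerivAt (fun p : ℝ × ℝ => χ p.1) _ p :=
    (hd p.1).comp_hasFDerivAt p (hasFDerivAt_fst (𝕜 := ℝ) (p := p))
  have h₂ : HasFDerivAt (fun p : ℝ × ℝ => χ p.2) _ p :=
    (hd p.2).comp_hasFDerivAt p (hasFDerivAt_snd (𝕜 := ℝ) (p := p))
  have h : HasFDerivAt ((fun p : ℝ × ℝ => χ p.1 * χ p.2) * g) _ p :=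
    (h₁.mul h₂).mul hg.hasFDerivAt
  simp [h.fderiv]
  ring

theorem truncated_form_le {L : ℝ} (hL : 0 < L) {g : ℝ × ℝ → ℝ} (hg : TestFun Gam g) (p : ℝ × ℝ) :
    gradSq2 ((fun p : ℝ × ℝ => guideCutoff L p.1 * guideCutoff L p.2) * g) p -
        lamG * ((fun p : ℝ × ℝ => guideCutoff L p.1 * guideCutoff L p.2) * g) p ^ 2 ≤
      (truncation L).indicator (fun p => gradSq2 g p - lamG * g p ^ 2) p +
        truncationConst / L ^ 4 * (truncation cornerRadius).indicator (fun p => g p ^ 2) p -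
        discardedWeight L p.2 * (fderiv ℝ g p (1, 0) ^ 2 - π ^ 2 * g p ^ 2) -
        discardedWeight L p.1 * (fderiv ℝ g p (0, 1) ^ 2 - π ^ 2 * g p ^ 2) := by
  have hfderiv := fderiv_cutoff_mul (contDiff_guideCutoff L) (hg.differentiableAt p)
  have hind (M : ℝ) (f : ℝ × ℝ → ℝ) :
      (truncation M).indicator f p = if p.1 < M ∧ p.2 < M then f p else 0 := by
    simp [indicator_apply, truncation]
  by_cases hp : p ∈ Gam
  · simp only [hind, gradSq2, hfderiv, Pi.mul_apply]
    rcases min_lt_iff.1 hp.2 with h | h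
    · have hform := guideCutoff_form_le hL p.2 (fderiv ℝ g p (1, 0)) (fderiv ℝ g p (0, 1)) (g p)
      simp only [guideCutoff_of_nonpos L h.le, deriv_guideCutoff_of_nonpos L h.le,
        discardedWeight_of_nonpos L h.le, h.trans hL, h.trans cornerRadius_pos, true_and]
      refine le_trans (le_of_eq ?_) (hform.trans (le_of_eq ?_))
      · ring
      · unfold truncationError
        split_ifs <;> ring
    · have hform := guideCutoff_form_le hL p.1 (fderiv ℝ g p (0, 1)) (fderiv ℝ g p (1, 0)) (g p)
      simp only [guideCutoff_of_nonpos L h.le, deriv_guideCutoff_of_nonpos L h.le,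
        discardedWeight_of_nonpos L h.le, h.trans hL, h.trans cornerRadius_pos, and_true]
      refine le_trans (le_of_eq ?_) (hform.trans (le_of_eq ?_))
      · ring
      · unfold truncationError
        split_ifs <;> ring
  · have hfd (e : ℝ × ℝ) : fderiv ℝ g p e = 0 := by simp [hg.fderiv_eq_zero hp]
    have hzero : g p = 0 := hg.eq_zero hp
    simp [hind, gradSq2, hfderiv, hfd, hzero]

theorem truncated_guide_inequality {L : ℝ} (hL : 0 < L) {g : ℝ × ℝ → ℝ} (hg : TestFun Gam g) :
    0 ≤ (∫ p in truncation L, (gradSq2 g p - lamG * g p ^ 2)) +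
      truncationConst / L ^ 4 * ∫ p in truncation cornerRadius, g p ^ 2 := by
  have hχ : ContDiff ℝ 1 fun p : ℝ × ℝ => guideCutoff L p.1 * guideCutoff L p.2 :=
    ((contDiff_guideCutoff L).comp contDiff_fst).mul ((contDiff_guideCutoff L).comp contDiff_snd)
  have hG := hg.mul hχ
  have hfst := integrable_discardedWeight_mul L hg measurable_snd (1, 0)
  have hsnd := integrable_discardedWeight_mul L hg measurable_fst (0, 1)
  have hform : Integrable fun p => gradSq2 g p - lamG * g p ^ 2 :=
    hg.integrable_gradSq2.sub (hg.integrable_sq.const_mul _)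
  have hL₁ := hform.indicator (measurableSet_truncation L)
  have hc₁ := ((hg.integrable_sq (μ := volume)).indicator
    (measurableSet_truncation cornerRadius)).const_mul (truncationConst / L ^ 4)
  have hmono := integral_mono (hG.integrable_gradSq2.sub (hG.integrable_sq.const_mul lamG))
    (((hL₁.add hc₁).sub hfst).sub hsnd) (truncated_form_le hL hg)
  rw [integral_sub' hG.integrable_gradSq2 (hG.integrable_sq.const_mul lamG), integral_const_mul,
    integral_sub' ((hL₁.add hc₁).sub hfst) hsnd, integral_sub' (hL₁.add hc₁) hfst,
    integral_add' hL₁ hc₁, integral_indicator (measurableSet_truncation L), integral_const_mul,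
    integral_indicator (measurableSet_truncation cornerRadius)] at hmono
  linarith [lamG_mul_integral_sq_le hG, integral_discardedWeight_mul_fst_nonneg L hg,
    integral_discardedWeight_mul_snd_nonneg L hg]

/-! ### Reduction to a bounded core -/

theorem gradSq3_nonneg (u : ℝ × ℝ × ℝ → ℝ) (x : ℝ × ℝ × ℝ) : 0 ≤ gradSq3 u x := by
  unfold gradSq3
  positivity

/-- The density of the quadratic form of `-Δ - λ₁(Γ)`. -/
def formDensity (w : ℝ × ℝ × ℝ → ℝ) (x : ℝ × ℝ × ℝ) : ℝ := gradSq3 w x - lamG * w x ^ 2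

theorem TestFun.integrable_gradSq3 {U : Set (ℝ × ℝ × ℝ)} {w : ℝ × ℝ × ℝ → ℝ} (hw : TestFun U w) :
    Integrable (gradSq3 w) :=
  ((hw.integrable_fderiv_apply_sq _).add (hw.integrable_fderiv_apply_sq _)).add
    (hw.integrable_fderiv_apply_sq _)

theorem TestFun.integrable_formDensity {U : Set (ℝ × ℝ × ℝ)} {w : ℝ × ℝ × ℝ → ℝ}
    (hw : TestFun U w) : Integrable (formDensity w) :=
  hw.integrable_gradSq3.sub (hw.integrable_sq.const_mul _)

/-- The tube where the first coordinate exceeds `R` and is the largest one. -/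
def tube (R : ℝ) : Set (ℝ × ℝ × ℝ) := {x | R < x.1 ∧ x.2 ∈ truncation x.1}

/-- The region outside all the tubes; it meets `Λ` in a bounded set. -/
def core (R : ℝ) : Set (ℝ × ℝ × ℝ) := Iic R ×ˢ Iic R ×ˢ Iic R

theorem measurableSet_tube (R : ℝ) : MeasurableSet (tube R) :=
  (measurableSet_lt measurable_const measurable_fst).inter
    ((measurableSet_lt measurable_snd.fst measurable_fst).inter
      (measurableSet_lt measurable_snd.snd measurable_fst))

theorem measurableSet_core (R : ℝ) : MeasurableSet (core R) :=
  measurableSet_Iic.prod (measurableSet_Iic.prod measurableSet_Iic)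

section Fibered

variable {α β : Type*} [MeasurableSpace α] [MeasurableSpace β] {μ : Measure α} {ν : Measure β}
  [SFinite ν] {s : Set (α × β)} {f : α × β → ℝ}

theorem setIntegral_prod_eq_integral_section [SFinite μ] (hs : MeasurableSet s)
    (hf : IntegrableOn f s (μ.prod ν)) :
    ∫ z in s, f z ∂μ.prod ν = ∫ x, ∫ y in Prod.mk x ⁻¹' s, f (x, y) ∂ν ∂μ := by
  rw [← integral_indicator hs, integral_prod _ (hf.integrable_indicator hs)]
  simp_rw [← integral_indicator (measurable_prodMk_left hs)]
  rfl

theorem integrable_integral_section (hs : MeasurableSet s) (hf : IntegrableOn f s (μ.prod ν)) :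
    Integrable (fun x => ∫ y in Prod.mk x ⁻¹' s, f (x, y) ∂ν) μ := by
  simp_rw [← integral_indicator (measurable_prodMk_left hs)]
  exact (hf.integrable_indicator hs).integral_prod_left

theorem setIntegral_prod_symm [SFinite μ] {s : Set α} {t : Set β}
    (hf : IntegrableOn f (s ×ˢ t) (μ.prod ν)) :
    ∫ z in s ×ˢ t, f z ∂μ.prod ν = ∫ y in t, ∫ x in s, f (x, y) ∂μ ∂ν := by
  rw [IntegrableOn, ← Measure.prod_restrict] at hf
  rw [← Measure.prod_restrict, integral_prod_symm _ hf]

theorem integrable_setIntegral_symm [SFinite μ] {s : Set α} {t : Set β}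
    (hf : IntegrableOn f (s ×ˢ t) (μ.prod ν)) :
    IntegrableOn (fun y => ∫ x in s, f (x, y) ∂μ) t ν := by
  rw [IntegrableOn, ← Measure.prod_restrict] at hf
  exact hf.integral_prod_right

end Fibered

theorem TestFun.section_mem_guide {w : ℝ × ℝ × ℝ → ℝ} (hw : TestFun Lam3 w) {t : ℝ} (ht : 0 ≤ t) :
    TestFun Gam fun p => w (t, p) :=
  (hw.slice_right t).mono fun _ hp =>
    ⟨(lt_min_iff.1 hp.1).2, (min_lt_iff.1 hp.2).resolve_left ht.not_gt⟩

theorem truncation_mono {s t : ℝ} (h : s ≤ t) : truncation s ⊆ truncation t :=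
  prod_mono (Iio_subset_Iio h) (Iio_subset_Iio h)

theorem section_form_ge {w : ℝ × ℝ × ℝ → ℝ} (hw : TestFun Lam3 w) {t : ℝ}
    (ht : cornerRadius ≤ t) :
    ∫ p in truncation cornerRadius,
        (fderiv ℝ w (t, p) (1, 0, 0) ^ 2 - truncationConst / t ^ 4 * w (t, p) ^ 2) ≤
      ∫ p in truncation t, formDensity w (t, p) := by
  have ht₀ : 0 < t := cornerRadius_pos.trans_le ht
  have hslice := hw.section_mem_guide ht₀.le
  have hd : Integrable fun p => fderiv ℝ w (t, p) (1, 0, 0) ^ 2 :=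
    hw.integrable_fderiv_apply_sq_slice_right t (1, 0, 0)
  have hsq : Integrable fun p => w (t, p) ^ 2 := hslice.integrable_sq
  have hform : Integrable fun p => gradSq2 (fun p => w (t, p)) p - lamG * w (t, p) ^ 2 :=
    hslice.integrable_gradSq2.sub (hsq.const_mul _)
  have hsplit (p : ℝ × ℝ) : formDensity w (t, p) =
      fderiv ℝ w (t, p) (1, 0, 0) ^ 2 + (gradSq2 (fun p => w (t, p)) p - lamG * w (t, p) ^ 2) := by
    simp only [formDensity, gradSq3, gradSq2, hw.fderiv_slice_right]
    ring
  have hmono : ∫ p in truncation cornerRadius, fderiv ℝ w (t, p) (1, 0, 0) ^ 2 ≤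
      ∫ p in truncation t, fderiv ℝ w (t, p) (1, 0, 0) ^ 2 :=
    setIntegral_mono_set hd.integrableOn (ae_of_all _ fun p => sq_nonneg _)
      (truncation_mono ht).eventuallyLE
  simp only [hsplit]
  rw [integral_sub hd.integrableOn (hsq.const_mul _).integrableOn,
    integral_add hd.integrableOn hform.integrableOn, integral_const_mul]
  linarith [truncated_guide_inequality ht₀ hslice]

theorem integral_Ioi_prod_truncation_ge {R : ℝ} (hR : 1 ≤ R) (hcR : cornerRadius ≤ R)
    (hKR : 24 * truncationConst ≤ R ^ 2) {U : Set (ℝ × ℝ × ℝ)} {w : ℝ × ℝ × ℝ → ℝ}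
    (hw : TestFun U w) :
    -(1 / 6) * ∫ x in core R, (fderiv ℝ w x (1, 0, 0) ^ 2 + w x ^ 2) ≤
      ∫ x in Ioi R ×ˢ truncation cornerRadius,
        (fderiv ℝ w x (1, 0, 0) ^ 2 - truncationConst / max x.1 R ^ 4 * w x ^ 2) := by
  have hmax (t : ℝ) : max t R ^ 4 ≠ 0 := (pow_pos (by linarith [le_max_right t R]) 4).ne'
  have hweight : Continuous fun x : ℝ × ℝ × ℝ => truncationConst / max x.1 R ^ 4 :=
    continuous_const.div (by fun_prop) fun x => hmax x.1
  have hneg : Integrable fun x =>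
      fderiv ℝ w x (1, 0, 0) ^ 2 - truncationConst / max x.1 R ^ 4 * w x ^ 2 :=
    (hw.integrable_fderiv_apply_sq (1, 0, 0)).sub (hw.integrable_mul_sq hweight)
  have hpos : Integrable fun x => fderiv ℝ w x (1, 0, 0) ^ 2 + w x ^ 2 :=
    (hw.integrable_fderiv_apply_sq (1, 0, 0)).add hw.integrable_sq
  have hline (p : ℝ × ℝ) :
      -(1 / 6) * ∫ t in Ioc (R - 1) R, (fderiv ℝ w (t, p) (1, 0, 0) ^ 2 + w (t, p) ^ 2) ≤
        ∫ t in Ioi R, (fderiv ℝ w (t, p) (1, 0, 0) ^ 2 -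
          truncationConst / max t R ^ 4 * w (t, p) ^ 2) := by
    have hderiv (t : ℝ) : fderiv ℝ w (t, p) (1, 0, 0) = deriv (fun t => w (t, p)) t :=
      (hw.fderiv_slice_left t 1 p).symm
    simp only [hderiv]
    exact neg_integral_Ioc_le_integral_Ioi_sub ((hw.slice_left p).mono (subset_univ _)) hR hKR
  have hsub : Ioc (R - 1) R ×ˢ truncation cornerRadius ⊆ core R := fun x hx =>
    ⟨hx.1.2, hx.2.1.le.trans hcR, hx.2.2.le.trans hcR⟩
  calc _ ≤ -(1 / 6) * ∫ x in Ioc (R - 1) R ×ˢ truncation cornerRadius,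
          (fderiv ℝ w x (1, 0, 0) ^ 2 + w x ^ 2) :=
        mul_le_mul_of_nonpos_left (setIntegral_mono_set hpos.integrableOn
          (ae_of_all _ fun x => add_nonneg (sq_nonneg _) (sq_nonneg _)) hsub.eventuallyLE)
          (by norm_num)
    _ ≤ _ := by
      rw [Measure.volume_eq_prod] at hneg hpos ⊢
      rw [setIntegral_prod_symm hpos.integrableOn, setIntegral_prod_symm hneg.integrableOn,
        ← integral_const_mul]
      exact integral_mono (integrable_setIntegral_symm hpos.integrableOn |>.const_mul _)
        (integrable_setIntegral_symm hneg.integrableOn) hline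

theorem tube_inequality {R : ℝ} (hR : 1 ≤ R) (hcR : cornerRadius ≤ R)
    (hKR : 24 * truncationConst ≤ R ^ 2) {w : ℝ × ℝ × ℝ → ℝ} (hw : TestFun Lam3 w) :
    -(1 / 6) * ∫ x in core R, (fderiv ℝ w x (1, 0, 0) ^ 2 + w x ^ 2) ≤
      ∫ x in tube R, formDensity w x := by
  have hmax (t : ℝ) : max t R ^ 4 ≠ 0 := (pow_pos (by linarith [le_max_right t R]) 4).ne'
  have hweight : Continuous fun x : ℝ × ℝ × ℝ => truncationConst / max x.1 R ^ 4 :=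
    continuous_const.div (by fun_prop) fun x => hmax x.1
  have hneg : Integrable fun x =>
      fderiv ℝ w x (1, 0, 0) ^ 2 - truncationConst / max x.1 R ^ 4 * w x ^ 2 :=
    (hw.integrable_fderiv_apply_sq (1, 0, 0)).sub (hw.integrable_mul_sq hweight)
  have hform := hw.integrable_formDensity
  have hprod : MeasurableSet (Ioi R ×ˢ truncation cornerRadius) :=
    measurableSet_Ioi.prod (measurableSet_truncation _)
  refine (integral_Ioi_prod_truncation_ge hR hcR hKR hw).trans ?_
  rw [Measure.volume_eq_prod] at hneg hform ⊢
  rw [setIntegral_prod_eq_integral_section hprod hneg.integrableOn,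
    setIntegral_prod_eq_integral_section (measurableSet_tube R) hform.integrableOn]
  refine integral_mono (integrable_integral_section hprod hneg.integrableOn)
    (integrable_integral_section (measurableSet_tube R) hform.integrableOn) fun t => ?_
  by_cases ht : R < t
  · have htube : Prod.mk t ⁻¹' tube R = truncation t := by
      ext p
      simp [tube, ht]
    simpa only [mk_preimage_prod_right (mem_Ioi.2 ht), htube, max_eq_left ht.le] using
      section_form_ge hw (hcR.trans ht.le)
  · have htube : Prod.mk t ⁻¹' tube R = ∅ := by
      ext p
      simp [tube, ht]
    simp [mk_preimage_prod_right_eq_empty (mt mem_Ioi.1 ht), htube]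

/-- The cyclic permutation of the coordinates, which maps the three tubes into one another. -/
def rotate : (ℝ × ℝ × ℝ) ≃L[ℝ] ℝ × ℝ × ℝ :=
  (ContinuousLinearEquiv.prodComm ℝ ℝ (ℝ × ℝ)).trans (ContinuousLinearEquiv.prodAssoc ℝ ℝ ℝ ℝ)

theorem rotate_apply (x : ℝ × ℝ × ℝ) : rotate x = (x.2.1, x.2.2, x.1) := rfl

theorem rotate_symm_apply (x : ℝ × ℝ × ℝ) : rotate.symm x = (x.2.2, x.1, x.2.1) := rfl

theorem measurePreserving_rotate : MeasurePreserving rotate :=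
  (measurePreserving_prodAssoc (volume : Measure ℝ) (volume : Measure ℝ) volume).comp
    (Measure.measurePreserving_swap (μ := (volume : Measure ℝ)))

theorem measurePreserving_rotate_symm : MeasurePreserving rotate.symm :=
  measurePreserving_rotate.symm rotate.toHomeomorph.toMeasurableEquiv

theorem setIntegral_comp_rotate_symm (s : Set (ℝ × ℝ × ℝ)) (f : ℝ × ℝ × ℝ → ℝ) :
    ∫ x in s, f (rotate.symm x) = ∫ x in rotate ⁻¹' s, f x := by
  have hs : rotate.symm ⁻¹' (rotate ⁻¹' s) = s := by
    ext x
    simp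
  rw [← measurePreserving_rotate_symm.setIntegral_preimage_emb
    rotate.symm.toHomeomorph.measurableEmbedding f, hs]

theorem TestFun.comp_rotate_symm {w : ℝ × ℝ × ℝ → ℝ} (hw : TestFun Lam3 w) :
    TestFun Lam3 (w ∘ rotate.symm) :=
  (hw.comp_equiv rotate.symm).mono fun x hx => by
    simpa only [Lam3, mem_preimage, mem_ofPred_eq, rotate_symm_apply, min_left_comm x.2.2,
      min_comm x.2.2] using hx

theorem fderiv_comp_rotate_symm (w : ℝ × ℝ × ℝ → ℝ) (x v : ℝ × ℝ × ℝ) :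
    fderiv ℝ (w ∘ rotate.symm) x v = fderiv ℝ w (rotate.symm x) (rotate.symm v) := by
  simp [rotate.symm.comp_right_fderiv]

theorem formDensity_comp_rotate_symm (w : ℝ × ℝ × ℝ → ℝ) (x : ℝ × ℝ × ℝ) :
    formDensity (w ∘ rotate.symm) x = formDensity w (rotate.symm x) := by
  simp only [formDensity, gradSq3, fderiv_comp_rotate_symm, Function.comp_apply,
    rotate_symm_apply]
  ring

theorem tube_inequality_rotate {R : ℝ} {S : Set (ℝ × ℝ × ℝ)} {v : ℝ × ℝ × ℝ}
    (h : ∀ {w : ℝ × ℝ × ℝ → ℝ}, TestFun Lam3 w →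
      -(1 / 6) * ∫ x in core R, (fderiv ℝ w x v ^ 2 + w x ^ 2) ≤ ∫ x in S, formDensity w x)
    {w : ℝ × ℝ × ℝ → ℝ} (hw : TestFun Lam3 w) :
    -(1 / 6) * ∫ x in core R, (fderiv ℝ w x (rotate.symm v) ^ 2 + w x ^ 2) ≤
      ∫ x in rotate ⁻¹' S, formDensity w x := by
  have hcore : rotate ⁻¹' core R = core R := by
    ext x
    simp only [core, mem_preimage, mem_prod, rotate_apply]
    tauto
  have hrot := h hw.comp_rotate_symm
  simp only [fderiv_comp_rotate_symm, formDensity_comp_rotate_symm, Function.comp_apply] at hrot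
  rwa [setIntegral_comp_rotate_symm _ fun x => fderiv ℝ w x (rotate.symm v) ^ 2 + w x ^ 2,
    setIntegral_comp_rotate_symm, hcore] at hrot

theorem ae_fst_ne_snd_fst : ∀ᵐ x : ℝ × ℝ × ℝ, x.1 ≠ x.2.1 := by
  have hs : MeasurableSet {x : ℝ × ℝ × ℝ | x.1 ≠ x.2.1} :=
    (measurableSet_eq_fun measurable_fst measurable_snd.fst).compl
  rw [Measure.volume_eq_prod, Measure.ae_prod_iff_ae_ae hs]
  refine ae_of_all _ fun t => ?_
  filter_upwards [Measure.quasiMeasurePreserving_fst.ae (Measure.ae_ne volume t)] with p hp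
  exact hp.symm

theorem compl_core_ae_eq (R : ℝ) : ((core R)ᶜ : Set (ℝ × ℝ × ℝ)) =ᵐ[volume]
    (tube R ∪ (rotate ⁻¹' tube R ∪ rotate ⁻¹' (rotate ⁻¹' tube R)) : Set (ℝ × ℝ × ℝ)) := by
  have hrot := measurePreserving_rotate.quasiMeasurePreserving
  rw [eventuallyEq_set]
  have h₁₂ := ae_fst_ne_snd_fst
  have h₂₃ := hrot.ae h₁₂
  filter_upwards [h₁₂, h₂₃, hrot.ae h₂₃] with x h₁₂ h₂₃ h₃₁
  simp only [rotate_apply] at h₂₃ h₃₁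
  simp only [core, tube, truncation, mem_compl_iff, mem_union, mem_preimage, mem_prod,
    mem_ofPred_eq, mem_Iic, mem_Iio, rotate_apply]
  grind

theorem disjoint_tube_rotate (R : ℝ) : Disjoint (tube R) (rotate ⁻¹' tube R) :=
  disjoint_left.2 fun _ h₁ h₂ => lt_asymm (mem_Iio.1 h₁.2.1) h₂.2.2

theorem disjoint_tube_rotate_rotate (R : ℝ) :
    Disjoint (tube R) (rotate ⁻¹' (rotate ⁻¹' tube R)) :=
  disjoint_left.2 fun _ h₁ h₃ => lt_asymm (mem_Iio.1 h₁.2.2) h₃.2.1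

theorem integral_eq_core_add_tubes (R : ℝ) {f : ℝ × ℝ × ℝ → ℝ} (hf : Integrable f) :
    ∫ x, f x = (∫ x in core R, f x) + ((∫ x in tube R, f x) + ((∫ x in rotate ⁻¹' tube R, f x) +
      ∫ x in rotate ⁻¹' (rotate ⁻¹' tube R), f x)) := by
  have h₂ : MeasurableSet (rotate ⁻¹' tube R) :=
    rotate.continuous.measurable (measurableSet_tube R)
  have h₃ : MeasurableSet (rotate ⁻¹' (rotate ⁻¹' tube R)) := rotate.continuous.measurable h₂
  rw [← integral_add_compl (measurableSet_core R) hf, setIntegral_congr_set (compl_core_ae_eq R),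
    setIntegral_union ((disjoint_tube_rotate R).union_right (disjoint_tube_rotate_rotate R))
      (h₂.union h₃) hf.integrableOn hf.integrableOn,
    setIntegral_union ((disjoint_tube_rotate R).preimage _) h₃ hf.integrableOn hf.integrableOn]

theorem core_form_le {R : ℝ} (hR : 1 ≤ R) (hcR : cornerRadius ≤ R)
    (hKR : 24 * truncationConst ≤ R ^ 2) {w : ℝ × ℝ × ℝ → ℝ} (hw : TestFun Lam3 w) :
    (1 / 2) * (∫ x in core R, gradSq3 w x) - (lamG + 1) * ∫ x in core R, w x ^ 2 ≤
      ∫ x, formDensity w x := by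
  have htube₁ {w} (hw : TestFun Lam3 w) := tube_inequality hR hcR hKR hw
  have htube₂ {w} (hw : TestFun Lam3 w) := tube_inequality_rotate htube₁ hw
  have h₁ := htube₁ hw
  have h₂ := htube₂ hw
  have h₃ := tube_inequality_rotate htube₂ hw
  simp only [rotate_symm_apply] at h₁ h₂ h₃
  have hsq : IntegrableOn (fun x => w x ^ 2) (core R) := hw.integrable_sq.integrableOn
  have hd (e : ℝ × ℝ × ℝ) : IntegrableOn (fun x => fderiv ℝ w x e ^ 2) (core R) :=
    (hw.integrable_fderiv_apply_sq e).integrableOn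
  have hd₀ (e : ℝ × ℝ × ℝ) : 0 ≤ ∫ x in core R, fderiv ℝ w x e ^ 2 :=
    integral_nonneg fun x => sq_nonneg _
  have hsq₀ : 0 ≤ ∫ x in core R, w x ^ 2 := integral_nonneg fun x => sq_nonneg _
  have hgrad : ∫ x in core R, gradSq3 w x = (∫ x in core R, fderiv ℝ w x (1, 0, 0) ^ 2) +
      (∫ x in core R, fderiv ℝ w x (0, 1, 0) ^ 2) + ∫ x in core R, fderiv ℝ w x (0, 0, 1) ^ 2 := by
    rw [← integral_add' (hd _) (hd _), ← integral_add' ((hd _).add (hd _)) (hd _)]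
    rfl
  have hcore : ∫ x in core R, formDensity w x =
      (∫ x in core R, gradSq3 w x) - lamG * ∫ x in core R, w x ^ 2 := by
    rw [← integral_const_mul]
    exact integral_sub hw.integrable_gradSq3.integrableOn (hsq.const_mul _)
  rw [integral_add (hd _) hsq] at h₁ h₂ h₃
  rw [integral_eq_core_add_tubes R hw.integrable_formDensity, hcore]
  linarith [hd₀ (1, 0, 0), hd₀ (0, 1, 0), hd₀ (0, 0, 1)]

/-! ### Poincaré inequality on small cubes -/

/-- The squared deviation `∫ (f - ⨍ f)² ∂μ` of `f` from its mean, in expanded form; for a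
probability measure this is the variance. -/
def dispersion {α : Type*} [MeasurableSpace α] (μ : Measure α) (f : α → ℝ) : ℝ :=
  ∫ x, f x ^ 2 ∂μ - (∫ x, f x ∂μ) ^ 2 / μ.real univ

section Dispersion

variable {α β : Type*} [MeasurableSpace α] [MeasurableSpace β] {μ : Measure α} {ν : Measure β}
  [IsFiniteMeasure μ] [IsFiniteMeasure ν]

theorem integral_sub_const_sq {f : α → ℝ} (hf : MemLp f 2 μ) (c : ℝ) :
    ∫ x, (f x - c) ^ 2 ∂μ = dispersion μ f + (∫ x, f x ∂μ - c * μ.real univ) ^ 2 / μ.real univ := by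
  have hf₁ : Integrable f μ := hf.integrable one_le_two
  have hsq : Integrable (fun x => f x ^ 2) μ := hf.integrable_sq
  have hlin : Integrable (fun x => f x ^ 2 - 2 * c * f x) μ := hsq.sub (hf₁.const_mul _)
  have hexpand (x : α) : (f x - c) ^ 2 = f x ^ 2 - 2 * c * f x + c ^ 2 := by ring
  simp_rw [hexpand]
  rw [integral_add hlin (integrable_const _), integral_sub hsq (hf₁.const_mul _),
    integral_const_mul, integral_const, smul_eq_mul]
  rcases eq_or_ne μ 0 with rfl | hμ
  · simp [dispersion]
  · have hne : μ.real univ ≠ 0 := by simpa [measureReal_def, ENNReal.toReal_eq_zero_iff] using hμ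
    unfold dispersion
    field_simp
    ring

theorem dispersion_le_integral_sub_const_sq {f : α → ℝ} (hf : MemLp f 2 μ) (c : ℝ) :
    dispersion μ f ≤ ∫ x, (f x - c) ^ 2 ∂μ := by
  rw [integral_sub_const_sq hf c]
  exact le_add_of_nonneg_right (by positivity)

theorem dispersion_eq_integral_sub_mean_sq {f : α → ℝ} (hf : MemLp f 2 μ) :
    dispersion μ f = ∫ x, (f x - (∫ x, f x ∂μ) / μ.real univ) ^ 2 ∂μ := by
  rw [integral_sub_const_sq hf]
  rcases eq_or_ne μ 0 with rfl | hμ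
  · simp
  · have hne : μ.real univ ≠ 0 := by simpa [measureReal_def, ENNReal.toReal_eq_zero_iff] using hμ
    rw [div_mul_cancel₀ _ hne, sub_self, zero_pow two_ne_zero, zero_div, add_zero]

theorem sq_integral_le {f : α → ℝ} (hf : MemLp f 2 μ) :
    (∫ x, f x ∂μ) ^ 2 ≤ μ.real univ * ∫ x, f x ^ 2 ∂μ := by
  rcases eq_or_ne μ 0 with rfl | hμ
  · simp
  · have hpos : 0 < μ.real univ := by
      simpa [measureReal_def, ENNReal.toReal_pos_iff, pos_iff_ne_zero] using hμ
    have hdisp : 0 ≤ dispersion μ f := by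
      rw [dispersion_eq_integral_sub_mean_sq hf]
      positivity
    rwa [dispersion, sub_nonneg, div_le_iff₀' hpos] at hdisp

variable {f : α × β → ℝ} {C : ℝ}

theorem memLp_section_left (hf : StronglyMeasurable f) (hC : ∀ z, ‖f z‖ ≤ C) (y : β) :
    MemLp (fun x => f (x, y)) 2 μ :=
  .of_bound (hf.comp_measurable measurable_prodMk_right).aestronglyMeasurable C
    (ae_of_all _ fun _ => hC _)

theorem memLp_section_right (hf : StronglyMeasurable f) (hC : ∀ z, ‖f z‖ ≤ C) (x : α) :
    MemLp (fun y => f (x, y)) 2 ν :=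
  .of_bound (hf.comp_measurable measurable_prodMk_left).aestronglyMeasurable C
    (ae_of_all _ fun _ => hC _)

theorem memLp_integral_left (hf : StronglyMeasurable f) (hC : ∀ z, ‖f z‖ ≤ C) :
    MemLp (fun y => ∫ x, f (x, y) ∂μ) 2 ν :=
  .of_bound hf.integral_prod_left'.aestronglyMeasurable (C * μ.real univ)
    (ae_of_all _ fun _ => norm_integral_le_of_norm_le_const (ae_of_all _ fun _ => hC _))

theorem dispersion_integral_le (hf : StronglyMeasurable f) (hC : ∀ z, ‖f z‖ ≤ C) :
    dispersion ν (fun y => ∫ x, f (x, y) ∂μ) ≤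
      μ.real univ * ∫ x, dispersion ν (fun y => f (x, y)) ∂μ := by
  set n := ν.real univ
  set M : α → ℝ := fun x => (∫ y, f (x, y) ∂ν) / n
  have hM : StronglyMeasurable M := hf.integral_prod_right'.div stronglyMeasurable_const
  have hMC (x : α) : ‖M x‖ ≤ C * n / ‖n‖ := by
    rw [norm_div]
    gcongr
    exact norm_integral_le_of_norm_le_const (ae_of_all _ fun _ => hC _)
  have hdev : StronglyMeasurable fun z : α × β => f z - M z.1 :=
    hf.sub (hM.comp_measurable measurable_fst)
  have hdevC (z : α × β) : ‖f z - M z.1‖ ≤ C + C * n / ‖n‖ :=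
    (norm_sub_le _ _).trans (add_le_add (hC z) (hMC z.1))
  have hdev2 : Integrable (fun z : α × β => (f z - M z.1) ^ 2) (μ.prod ν) :=
    (MemLp.of_bound hdev.aestronglyMeasurable _ (ae_of_all _ hdevC)).integrable_sq
  have hmean (y : β) : ∫ x, f (x, y) ∂μ - ∫ x, M x ∂μ = ∫ x, (f (x, y) - M x) ∂μ :=
    (integral_sub ((memLp_section_left hf hC y).integrable one_le_two)
      (.of_bound hM.aestronglyMeasurable _ (ae_of_all _ hMC))).symm
  calc dispersion ν (fun y => ∫ x, f (x, y) ∂μ)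
      ≤ ∫ y, (∫ x, f (x, y) ∂μ - ∫ x, M x ∂μ) ^ 2 ∂ν :=
        dispersion_le_integral_sub_const_sq (memLp_integral_left hf hC) _
    _ ≤ ∫ y, μ.real univ * ∫ x, (f (x, y) - M x) ^ 2 ∂μ ∂ν := by
        refine integral_mono ((memLp_integral_left hf hC).sub (memLp_const _)).integrable_sq
          (hdev2.integral_prod_right.const_mul _) fun y => ?_
        simpa only [hmean] using sq_integral_le (memLp_section_left hdev hdevC y)
    _ = μ.real univ * ∫ x, ∫ y, (f (x, y) - M x) ^ 2 ∂ν ∂μ := by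
        rw [integral_const_mul,
          integral_integral_swap (f := fun y x => (f (x, y) - M x) ^ 2) hdev2.swap]
    _ = μ.real univ * ∫ x, dispersion ν (fun y => f (x, y)) ∂μ := by
        simp_rw [dispersion_eq_integral_sub_mean_sq (memLp_section_right hf hC _)]
        rfl

theorem dispersion_prod (hf : StronglyMeasurable f) (hC : ∀ z, ‖f z‖ ≤ C) :
    dispersion (μ.prod ν) f = ∫ y, dispersion μ (fun x => f (x, y)) ∂ν +
      (μ.real univ)⁻¹ * dispersion ν (fun y => ∫ x, f (x, y) ∂μ) := by
  have hL2 : MemLp f 2 (μ.prod ν) := .of_bound hf.aestronglyMeasurable C (ae_of_all _ hC)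
  simp only [dispersion]
  rw [integral_sub hL2.integrable_sq.integral_prod_right
    ((memLp_integral_left hf hC).integrable_sq.div_const _), integral_div,
    integral_prod_symm _ hL2.integrable_sq, integral_prod_symm _ (hL2.integrable one_le_two),
    ← univ_prod_univ, measureReal_prod_prod]
  ring

/-- The tensorization (Efron–Stein) property of the variance. -/
theorem dispersion_prod_le (hf : StronglyMeasurable f) (hC : ∀ z, ‖f z‖ ≤ C) {A B : α × β → ℝ}
    (hA : Integrable A (μ.prod ν)) (hB : Integrable B (μ.prod ν))
    (hfA : ∀ y, dispersion μ (fun x => f (x, y)) ≤ ∫ x, A (x, y) ∂μ)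
    (hfB : ∀ x, dispersion ν (fun y => f (x, y)) ≤ ∫ y, B (x, y) ∂ν) :
    dispersion (μ.prod ν) f ≤ ∫ z, (A z + B z) ∂μ.prod ν := by
  have hL2 : MemLp f 2 (μ.prod ν) := .of_bound hf.aestronglyMeasurable C (ae_of_all _ hC)
  have hleft : ∫ y, dispersion μ (fun x => f (x, y)) ∂ν ≤ ∫ z, A z ∂μ.prod ν := by
    rw [integral_prod_symm _ hA]
    exact integral_mono (hL2.integrable_sq.integral_prod_right.sub
      ((memLp_integral_left hf hC).integrable_sq.div_const _)) hA.integral_prod_right hfA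
  have hright : ∫ x, dispersion ν (fun y => f (x, y)) ∂μ ≤ ∫ z, B z ∂μ.prod ν := by
    rw [integral_prod _ hB]
    refine integral_mono (hL2.integrable_sq.integral_prod_left.sub (.div_const ?_ _))
      hB.integral_prod_left hfB
    exact (memLp_integral_left (hf.comp_measurable measurable_swap)
      fun z => hC z.swap).integrable_sq
  have hmean : (μ.real univ)⁻¹ * dispersion ν (fun y => ∫ x, f (x, y) ∂μ) ≤
      ∫ x, dispersion ν (fun y => f (x, y)) ∂μ := by
    rcases eq_or_ne μ 0 with rfl | hμ
    · simp
    · have : NeZero μ := ⟨hμ⟩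
      exact inv_mul_le_iff₀ measureReal_univ_pos |>.2 (dispersion_integral_le hf hC)
  rw [dispersion_prod hf hC, integral_add hA hB]
  exact add_le_add hleft (hmean.trans hright)

end Dispersion

theorem dispersion_Ioc_le {f : ℝ → ℝ} (hf : ContDiff ℝ 1 f) {h : ℝ} (hh : 0 ≤ h) (a : ℝ) :
    dispersion (volume.restrict (Ioc a (a + h))) f ≤
      ∫ t in Ioc a (a + h), h ^ 2 * deriv f t ^ 2 := by
  have hderiv : Continuous (deriv f) := hf.continuous_deriv le_rfl
  have hLp {g : ℝ → ℝ} (hg : Continuous g) (b : ℝ) : MemLp g 2 (volume.restrict (Ioc a b)) :=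
    (memLp_two_iff_integrable_sq hg.aestronglyMeasurable).2 (hg.pow 2).integrableOn_Ioc
  have hpoint : ∀ t ∈ Ioc a (a + h), (f t - f a) ^ 2 ≤ h * ∫ s in Ioc a (a + h), deriv f s ^ 2 := by
    intro t ht
    have hftc : ∫ s in Ioc a t, deriv f s = f t - f a := by
      rw [← intervalIntegral.integral_of_le ht.1.le]
      exact intervalIntegral.integral_deriv_eq_sub
        (fun s _ => hf.differentiable one_ne_zero s) (hderiv.intervalIntegrable _ _)
    calc (f t - f a) ^ 2 ≤ (t - a) * ∫ s in Ioc a t, deriv f s ^ 2 := by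
          simpa [← hftc, ht.1.le] using sq_integral_le (hLp hderiv t)
      _ ≤ h * ∫ s in Ioc a (a + h), deriv f s ^ 2 :=
          mul_le_mul (by linarith [ht.2]) (setIntegral_mono_set (hLp hderiv _).integrable_sq
            (ae_of_all _ fun _ => sq_nonneg _) (Ioc_subset_Ioc_right ht.2).eventuallyLE)
            (integral_nonneg fun _ => sq_nonneg _) hh
  calc dispersion (volume.restrict (Ioc a (a + h))) f
      ≤ ∫ t in Ioc a (a + h), (f t - f a) ^ 2 :=
        dispersion_le_integral_sub_const_sq (hLp hf.continuous _) _
    _ ≤ ∫ t in Ioc a (a + h), h * ∫ s in Ioc a (a + h), deriv f s ^ 2 :=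
        setIntegral_mono_on ((hLp hf.continuous _).sub (memLp_const _)).integrable_sq
          (integrableOn_const measure_Ioc_lt_top.ne) measurableSet_Ioc hpoint
    _ = ∫ t in Ioc a (a + h), h ^ 2 * deriv f t ^ 2 := by
        rw [setIntegral_const, integral_const_mul]
        simp [hh]
        ring

theorem TestFun.dispersion_square_le {U : Set (ℝ × ℝ)} {g : ℝ × ℝ → ℝ} (hg : TestFun U g)
    {h : ℝ} (hh : 0 ≤ h) (a b : ℝ) :
    dispersion (volume.restrict (Ioc a (a + h) ×ˢ Ioc b (b + h))) g ≤
      ∫ x in Ioc a (a + h) ×ˢ Ioc b (b + h), h ^ 2 * gradSq2 g x := by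
  obtain ⟨C, hC⟩ := hg.hasCompactSupport.exists_bound_of_continuous hg.continuous
  have hpd (e : ℝ × ℝ) : Integrable (fun x => h ^ 2 * fderiv ℝ g x e ^ 2)
      ((volume.restrict (Ioc a (a + h))).prod (volume.restrict (Ioc b (b + h)))) := by
    rw [Measure.prod_restrict]
    exact ((hg.integrable_fderiv_apply_sq e).const_mul _).integrableOn
  simp_rw [gradSq2, mul_add]
  rw [Measure.volume_eq_prod, ← Measure.prod_restrict]
  refine dispersion_prod_le hg.continuous.stronglyMeasurable hC (hpd _) (hpd _)
    (fun y => ?_) fun x => ?_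
  · simpa [← fderiv_apply_one_eq_deriv, hg.fderiv_slice_left] using
      dispersion_Ioc_le (hg.slice_left y).contDiff hh a
  · simpa [← fderiv_apply_one_eq_deriv, hg.fderiv_slice_right] using
      dispersion_Ioc_le (hg.slice_right x).contDiff hh b

theorem TestFun.dispersion_cube_le {U : Set (ℝ × ℝ × ℝ)} {w : ℝ × ℝ × ℝ → ℝ} (hw : TestFun U w)
    {h : ℝ} (hh : 0 ≤ h) (a b c : ℝ) :
    dispersion (volume.restrict (Ioc a (a + h) ×ˢ Ioc b (b + h) ×ˢ Ioc c (c + h))) w ≤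
      ∫ x in Ioc a (a + h) ×ˢ Ioc b (b + h) ×ˢ Ioc c (c + h), h ^ 2 * gradSq3 w x := by
  obtain ⟨C, hC⟩ := hw.hasCompactSupport.exists_bound_of_continuous hw.continuous
  have hpd (e : ℝ × ℝ × ℝ) : Integrable (fun x => h ^ 2 * fderiv ℝ w x e ^ 2)
      ((volume.restrict (Ioc a (a + h))).prod
        (volume.restrict (Ioc b (b + h) ×ˢ Ioc c (c + h)))) := by
    rw [Measure.prod_restrict]
    exact ((hw.integrable_fderiv_apply_sq e).const_mul _).integrableOn
  have hsplit (x : ℝ × ℝ × ℝ) : h ^ 2 * gradSq3 w x = h ^ 2 * fderiv ℝ w x (1, 0, 0) ^ 2 +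
      (h ^ 2 * fderiv ℝ w x (0, 1, 0) ^ 2 + h ^ 2 * fderiv ℝ w x (0, 0, 1) ^ 2) := by
    rw [gradSq3]
    ring
  have : IsFiniteMeasure (volume.restrict (Ioc b (b + h) ×ˢ Ioc c (c + h))) := by
    rw [Measure.volume_eq_prod, ← Measure.prod_restrict]
    infer_instance
  simp_rw [hsplit]
  rw [Measure.volume_eq_prod, ← Measure.prod_restrict]
  refine dispersion_prod_le hw.continuous.stronglyMeasurable hC (hpd _) ((hpd _).add (hpd _))
    (fun y => ?_) fun x => ?_
  · simpa [← fderiv_apply_one_eq_deriv, hw.fderiv_slice_left, Prod.zero_eq_mk] using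
      dispersion_Ioc_le (hw.slice_left y).contDiff hh a
  · simpa [gradSq2, hw.fderiv_slice_right, mul_add] using
      (hw.slice_right x).dispersion_square_le hh b c

/-- The cube of side `h` with index `v` in the half-open grid through `(-1, -1, -1)`, the lower
corner of `Λ`. -/
def cell (h : ℝ) (v : ℤ × ℤ × ℤ) : Set (ℝ × ℝ × ℝ) :=
  Ioc (-1 + v.1 • h) (-1 + (v.1 + 1) • h) ×ˢ Ioc (-1 + v.2.1 • h) (-1 + (v.2.1 + 1) • h) ×ˢ
    Ioc (-1 + v.2.2 • h) (-1 + (v.2.2 + 1) • h)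

theorem measurableSet_cell (h : ℝ) (v : ℤ × ℤ × ℤ) : MeasurableSet (cell h v) :=
  measurableSet_Ioc.prod (measurableSet_Ioc.prod measurableSet_Ioc)

theorem TestFun.integral_sq_cell_le {U : Set (ℝ × ℝ × ℝ)} {w : ℝ × ℝ × ℝ → ℝ} (hw : TestFun U w)
    {h : ℝ} (hh : 0 ≤ h) (v : ℤ × ℤ × ℤ) :
    ∫ x in cell h v, w x ^ 2 ≤
      (∫ x in cell h v, w x) ^ 2 / h ^ 3 + h ^ 2 * ∫ x in cell h v, gradSq3 w x := by
  have hvol : (volume.restrict (cell h v)).real univ = h ^ 3 := by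
    simp [cell, Measure.volume_eq_prod, measureReal_prod_prod, add_mul, hh]
    ring
  have hdisp := hw.dispersion_cube_le hh (-1 + v.1 • h) (-1 + v.2.1 • h) (-1 + v.2.2 • h)
  simp_rw [add_assoc, ← add_one_zsmul] at hdisp
  change dispersion (volume.restrict (cell h v)) w ≤ ∫ x in cell h v, _ at hdisp
  rw [integral_const_mul, dispersion, hvol] at hdisp
  linarith

theorem pairwise_disjoint_cell (h : ℝ) : Pairwise (Function.onFun Disjoint (cell h)) := by
  intro v v' hv
  simp only [Function.onFun, cell, Set.disjoint_prod]
  have hdisj (m n : ℤ) (hmn : m ≠ n) :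
      Disjoint (Ioc (-1 + m • h) (-1 + (m + 1) • h)) (Ioc (-1 + n • h) (-1 + (n + 1) • h)) :=
    pairwise_disjoint_Ioc_add_zsmul (-1) h hmn
  by_contra! hmeet
  exact hv (Prod.ext (not_imp_comm.1 (hdisj _ _) hmeet.1)
    (Prod.ext (not_imp_comm.1 (hdisj _ _) hmeet.2.1) (not_imp_comm.1 (hdisj _ _) hmeet.2.2)))

theorem exists_mem_Ico_mem_Ioc_zsmul {N : ℕ} {h t : ℝ} (hh : 0 < h)
    (ht : t ∈ Ioc (-1) (-1 + N * h)) :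
    ∃ n ∈ Finset.Ico (0 : ℤ) N, t ∈ Ioc (-1 + n • h) (-1 + (n + 1) • h) := by
  obtain ⟨n, hn⟩ := mem_iUnion.1 ((iUnion_Ioc_add_zsmul hh (-1)).symm ▸ mem_univ t)
  refine ⟨n, ?_, hn⟩
  simp only [zsmul_eq_mul, mem_Ioc, Int.cast_add, Int.cast_one] at hn ht
  have hpos : (0 : ℝ) < n + 1 := pos_of_mul_pos_left (by linarith) hh.le
  have hlt : (n : ℝ) < N := lt_of_mul_lt_mul_right (by linarith) hh.le
  rw [Finset.mem_Ico]
  exact ⟨by exact_mod_cast Int.lt_add_one_iff.1 (by exact_mod_cast hpos), by exact_mod_cast hlt⟩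

theorem Ioc_zsmul_subset_Iic {N : ℕ} {h : ℝ} (hh : 0 ≤ h) {n : ℤ} (hn : n ∈ Finset.Ico (0 : ℤ) N) :
    Ioc (-1 + n • h) (-1 + (n + 1) • h) ⊆ Iic (-1 + N * h) := by
  have hn : (n + 1 : ℝ) ≤ N := by exact_mod_cast (Finset.mem_Ico.1 hn).2
  intro t ht
  have := ht.2
  simp only [zsmul_eq_mul, Int.cast_add, Int.cast_one] at this
  exact this.trans (by gcongr)

/-- The indices of the `N³` cells that fill the cube `(-1, -1 + N h]³`. -/
def cellIndices (N : ℕ) : Finset (ℤ × ℤ × ℤ) :=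
  Finset.Ico 0 ↑N ×ˢ Finset.Ico 0 ↑N ×ˢ Finset.Ico 0 ↑N

theorem setIntegral_core_eq_sum_cell {R h : ℝ} (hh : 0 < h) {N : ℕ} (hN : -1 + N * h = R)
    {g : ℝ × ℝ × ℝ → ℝ} (hg : Integrable g) (hg' : ∀ x ∉ Lam3, g x = 0) :
    ∫ x in core R, g x = ∑ v ∈ cellIndices N, ∫ x in cell h v, g x := by
  subst hN
  rw [← integral_biUnion_finset _ (fun v _ => measurableSet_cell h v)
    ((pairwise_disjoint_cell h).set_pairwise _) fun v _ => hg.integrableOn]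
  refine setIntegral_eq_of_subset_of_forall_sdiff_eq_zero (measurableSet_core _)
    (iUnion₂_subset fun v hv => ?_) fun x hx => hg' x fun hxΛ => hx.2 ?_
  · obtain ⟨hi, hjk⟩ := Finset.mem_product.1 hv
    obtain ⟨hj, hk⟩ := Finset.mem_product.1 hjk
    exact prod_mono (Ioc_zsmul_subset_Iic hh.le hi)
      (prod_mono (Ioc_zsmul_subset_Iic hh.le hj) (Ioc_zsmul_subset_Iic hh.le hk))
  · have hlow : -1 < x.1 ∧ -1 < x.2.1 ∧ -1 < x.2.2 := by
      simpa only [lt_min_iff] using hxΛ.1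
    obtain ⟨i, hi, hxi⟩ := exists_mem_Ico_mem_Ioc_zsmul hh ⟨hlow.1, hx.1.1⟩
    obtain ⟨j, hj, hxj⟩ := exists_mem_Ico_mem_Ioc_zsmul hh ⟨hlow.2.1, hx.1.2.1⟩
    obtain ⟨k, hk, hxk⟩ := exists_mem_Ico_mem_Ioc_zsmul hh ⟨hlow.2.2, hx.1.2.2⟩
    exact mem_iUnion₂.2 ⟨(i, j, k), Finset.mk_mem_product hi (Finset.mk_mem_product hj hk),
      hxi, hxj, hxk⟩

theorem exists_form_add_sum_sq_nonneg : ∃ (s : Finset (ℤ × ℤ × ℤ)) (h C : ℝ), ∀ w, TestFun Lam3 w →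
    0 ≤ (∫ x, formDensity w x) + C * ∑ v ∈ s, (∫ x in cell h v, w x) ^ 2 := by
  set R := 1 + cornerRadius + 24 * truncationConst
  have hcorner := cornerRadius_pos
  have hconst := truncationConst_nonneg
  have hR : 1 ≤ R := by linarith
  have hmesh : Tendsto (fun N : ℕ => (lamG + 1) * ((R + 1) / N) ^ 2) atTop (𝓝 0) := by
    simpa using ((tendsto_const_div_atTop_nhds_zero_nat (R + 1)).pow 2).const_mul (lamG + 1)
  obtain ⟨N, hNsmall, hN⟩ := ((hmesh.eventually_lt_const one_half_pos).and
    (eventually_gt_atTop 0)).exists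
  set h := (R + 1) / N with hhdef
  have hh : 0 < h := by positivity
  have hNh : -1 + N * h = R := by
    rw [hhdef]
    field_simp
    ring
  refine ⟨cellIndices N, h, (lamG + 1) / h ^ 3, fun w hw => ?_⟩
  have hsq : ∫ x in core R, w x ^ 2 ≤ (∑ v ∈ cellIndices N, (∫ x in cell h v, w x) ^ 2) / h ^ 3 +
      h ^ 2 * ∫ x in core R, gradSq3 w x := by
    rw [setIntegral_core_eq_sum_cell hh hNh hw.integrable_sq fun x hx => by simp [hw.eq_zero hx],
      setIntegral_core_eq_sum_cell hh hNh hw.integrable_gradSq3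
        fun x hx => by simp [gradSq3, hw.fderiv_eq_zero hx],
      Finset.sum_div, Finset.mul_sum, ← Finset.sum_add_distrib]
    exact Finset.sum_le_sum fun v _ => hw.integral_sq_cell_le hh.le v
  have hgrad : 0 ≤ ∫ x in core R, gradSq3 w x := integral_nonneg fun x => gradSq3_nonneg w x
  have hform := core_form_le hR (by linarith) (by nlinarith) hw
  have hpoincare := mul_le_mul_of_nonneg_left hsq (add_nonneg lamG_nonneg zero_le_one)
  have habsorb := mul_le_mul_of_nonneg_right hNsmall.le hgrad
  have hrearrange : (lamG + 1) / h ^ 3 * ∑ v ∈ cellIndices N, (∫ x in cell h v, w x) ^ 2 =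
      (lamG + 1) * ((∑ v ∈ cellIndices N, (∫ x in cell h v, w x) ^ 2) / h ^ 3) := by ring
  linarith

/-! ### Eigenvectors of a symmetric form below a given level -/

section FormEigenspace

variable {N W : Type*} [AddCommGroup N] [Module ℝ N] [AddCommGroup W] [Module ℝ W]
  {a b : N →ₗ[ℝ] N →ₗ[ℝ] ℝ} {L : ℝ} {u : N}

/-- The eigenspace of the bilinear form `a` relative to `b`: all `u` with `a v u = lam * b v u` for
every `v`. -/
def formEigenspace (a b : N →ₗ[ℝ] N →ₗ[ℝ] ℝ) (lam : ℝ) : Submodule ℝ N :=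
  LinearMap.ker (a.flip - lam • b.flip)

theorem mem_formEigenspace {lam : ℝ} :
    u ∈ formEigenspace a b lam ↔ ∀ v, a v u = lam * b v u := by
  simp [formEigenspace, LinearMap.ext_iff, sub_eq_zero]

theorem orthogonal_of_mem_formEigenspace (ha : ∀ u v, a u v = a v u) (hb : ∀ u v, b u v = b v u)
    {lam mu : ℝ} (hne : lam ≠ mu) {v : N} (hu : u ∈ formEigenspace a b lam)
    (hv : v ∈ formEigenspace a b mu) : b u v = 0 := by
  have h : (lam - mu) * b u v = 0 := by
    rw [sub_mul, hb u v, ← mem_formEigenspace.1 hu v, ha, mem_formEigenspace.1 hv u, hb, sub_self]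
  exact (mul_eq_zero.1 h).resolve_left (sub_ne_zero.2 hne)

theorem form_lt_of_mem_iSup_formEigenspace (ha : ∀ u v, a u v = a v u) (hb : ∀ u v, b u v = b v u)
    (hpos : ∀ u, u ≠ 0 → 0 < b u u) (hu : u ∈ ⨆ i : Iio L, formEigenspace a b i) (hu0 : u ≠ 0) :
    a u u < L * b u u := by
  obtain ⟨f, hf, hsum⟩ := (Submodule.mem_iSup_iff_exists_finsupp _ _).1 hu
  rw [Finsupp.sum] at hsum
  have hdiag : ∀ j ∈ f.support, b u (f j) = b (f j) (f j) := fun j hj => by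
    rw [← hsum, map_sum, LinearMap.sum_apply]
    exact Finset.sum_eq_single_of_mem j hj fun i _ hij =>
      orthogonal_of_mem_formEigenspace ha hb (Subtype.coe_ne_coe.2 hij) (hf i) (hf j)
  have hexpand (c : N →ₗ[ℝ] N →ₗ[ℝ] ℝ) : c u u = ∑ j ∈ f.support, c u (f j) := by
    rw [← map_sum, hsum]
  have hne : f.support.Nonempty := by
    by_contra h
    rw [Finset.not_nonempty_iff_eq_empty.1 h, Finset.sum_empty] at hsum
    exact hu0 hsum.symm
  rw [hexpand a, hexpand b, Finset.mul_sum]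
  refine Finset.sum_lt_sum_of_nonempty hne fun j hj => ?_
  rw [mem_formEigenspace.1 (hf j), hdiag j hj]
  exact mul_lt_mul_of_pos_right j.2 (hpos _ (Finsupp.mem_support_iff.1 hj))

-- `a - L b` is negative definite on the span, so `T` is injective there.
theorem finiteDimensional_iSup_formEigenspace [FiniteDimensional ℝ W]
    (ha : ∀ u v, a u v = a v u) (hb : ∀ u v, b u v = b v u) (hpos : ∀ u, u ≠ 0 → 0 < b u u)
    (T : N →ₗ[ℝ] W) (hT : ∀ u, T u = 0 → L * b u u ≤ a u u) :
    FiniteDimensional ℝ ↥(⨆ i : Iio L, formEigenspace a b i) := by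
  refine FiniteDimensional.of_injective (T.domRestrict _)
    (LinearMap.ker_eq_bot.1 (LinearMap.ker_eq_bot'.2 fun u hTu => ?_))
  by_contra hu
  exact (form_lt_of_mem_iSup_formEigenspace ha hb hpos u.2 (by simpa using hu)).not_ge (hT u hTu)

end FormEigenspace

/-! ### Integration by parts -/

namespace TestFun

variable {E : Type*} [NormedAddCommGroup E] [NormedSpace ℝ E] {U : Set E} {w F : E → ℝ}

theorem mul_contDiffOn (hw : TestFun U w) (hU : IsOpen U) (hF : ContDiffOn ℝ 1 F U) :
    TestFun U (w * F) := by
  have hsub : tsupport (w * F) ⊆ U := tsupport_mul_subset_left.trans hw.tsupport_subset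
  refine ⟨contMDiff_iff_contDiff.1 (contMDiff_of_tsupport fun x hx => ?_),
    hw.hasCompactSupport.mul_right, hsub⟩
  exact contMDiffAt_iff_contDiffAt.2
    (hw.contDiff.contDiffAt.mul (hF.contDiffAt (hU.mem_nhds (hsub hx))))

theorem fderiv_mul_contDiffOn (hw : TestFun U w) (hU : IsOpen U) (hF : ContDiffOn ℝ 1 F U)
    (x e : E) :
    fderiv ℝ (w * F) x e = fderiv ℝ w x e * F x + w x * fderiv ℝ F x e := by
  by_cases hx : x ∈ U
  · rw [fderiv_mul (hw.differentiableAt x)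
      ((hF.contDiffAt (hU.mem_nhds hx)).differentiableAt one_ne_zero)]
    simp
    ring
  · simp [(hw.mul_contDiffOn hU hF).fderiv_eq_zero hx, hw.fderiv_eq_zero hx, hw.eq_zero hx]

variable [MeasurableSpace E] [BorelSpace E] {μ : Measure E}

theorem integrable_mul_fderiv_apply [IsFiniteMeasureOnCompacts μ] (hw : TestFun U w)
    (hU : IsOpen U) (hF : ContDiffOn ℝ 1 F U) (e : E) :
    Integrable (fun x => w x * fderiv ℝ F x e) μ := by
  have hcont : Continuous fun x => w x * fderiv ℝ F x e :=
    (hw.continuous.continuousOn.mul ((hF.continuousOn_fderiv_of_isOpen hU le_rfl).clm_apply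
      continuousOn_const)).continuous_of_tsupport_subset hU
      (tsupport_mul_subset_left.trans hw.tsupport_subset)
  exact hcont.integrable_of_hasCompactSupport hw.hasCompactSupport.mul_right

variable [FiniteDimensional ℝ E] [μ.IsAddHaarMeasure]

theorem integral_fderiv_apply_eq_zero (hw : TestFun U w) (e : E) :
    ∫ x, fderiv ℝ w x e ∂μ = 0 := by
  have hderiv : Integrable (fun x => fderiv ℝ w x e) μ := (hw.continuous_fderiv_apply e)
    |>.integrable_of_hasCompactSupport (hw.hasCompactSupport_fderiv_apply e)
  simpa using integral_mul_fderiv_eq_neg_fderiv_mul_of_integrable (μ := μ) (f := fun _ => (1 : ℝ))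
    (g := w) (v := e) (by simp) (by simpa using hderiv)
    (by simpa using hw.continuous.integrable_of_hasCompactSupport hw.hasCompactSupport)
    (fun x _ => differentiableAt_const _) (fun x _ => hw.differentiableAt x)

theorem integral_fderiv_apply_mul (hw : TestFun U w) (hU : IsOpen U) (hF : ContDiffOn ℝ 1 F U)
    (e : E) : ∫ x, fderiv ℝ w x e * F x ∂μ = -∫ x, w x * fderiv ℝ F x e ∂μ := by
  have hprod := hw.mul_contDiffOn hU hF
  have hpd : Integrable (fun x => fderiv ℝ (w * F) x e) μ := (hprod.continuous_fderiv_apply e)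
    |>.integrable_of_hasCompactSupport (hprod.hasCompactSupport_fderiv_apply e)
  have hsplit (x : E) : fderiv ℝ w x e * F x = fderiv ℝ (w * F) x e - w x * fderiv ℝ F x e := by
    rw [hw.fderiv_mul_contDiffOn hU hF, add_sub_cancel_right]
  simp only [hsplit]
  rw [integral_sub hpd (hw.integrable_mul_fderiv_apply hU hF e),
    hprod.integral_fderiv_apply_eq_zero, zero_sub]

end TestFun

/-! ### The energy space -/

theorem inner_toLp {α : Type*} [MeasurableSpace α] {μ : Measure α} {f g : α → ℝ} (hf : MemLp f 2 μ)
    (hg : MemLp g 2 μ) : inner ℝ (hf.toLp f) (hg.toLp g) = ∫ x, f x * g x ∂μ := by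
  rw [L2.inner_def]
  refine integral_congr_ae ?_
  filter_upwards [hf.coeFn_toLp, hg.coeFn_toLp] with x hfx hgx
  rw [hfx, hgx, real_inner_eq_re_inner, RCLike.inner_apply', conj_trivial, RCLike.re_to_real]

theorem DominatedTendsto.tendsto_toLp {α : Type*} [MeasurableSpace α] {μ : Measure α}
    {f : ℕ → α → ℝ} {g : α → ℝ} (h : DominatedTendsto f g μ) (hf : ∀ n, MemLp (f n) 2 μ)
    (hg : MemLp g 2 μ) :
    Tendsto (fun n => (hf n).toLp (f n)) atTop (𝓝 (hg.toLp g)) := by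
  obtain ⟨hmeas, hlim, G, hG, hle⟩ := h
  have hdiff : DominatedTendsto (fun n => f n - g) 0 μ := by
    refine ⟨fun n => (hmeas n).sub hg.aestronglyMeasurable, ?_, fun x => G x + |g x|,
      hG.add hg.abs, fun n x => (abs_sub _ _).trans (add_le_add_left (hle n x) _)⟩
    filter_upwards [hlim] with x hx using by simpa using hx.sub_const (g x)
  have hnorm (n : ℕ) : ‖(hf n).toLp (f n) - hg.toLp g‖ = √(∫ x, (f n - g) x ^ 2 ∂μ) := by
    simp only [← MemLp.toLp_sub, norm_eq_sqrt_real_inner, inner_toLp, sq]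
  rw [tendsto_iff_norm_sub_tendsto_zero]
  simp only [hnorm]
  simpa using hdiff.integral_sq.sqrt

section EnergySpace

variable {E : Type*} [NormedAddCommGroup E] [NormedSpace ℝ E] [MeasurableSpace E] [BorelSpace E]
  {U : TopologicalSpace.Opens E} {μ : Measure E}

/-- The real vector space of functions of finite energy on the open set `U`. -/
def energySpace (U : TopologicalSpace.Opens E) (μ : Measure E) : Submodule ℝ (E → ℝ) where
  carrier := {v | FiniteEnergy U μ v}
  zero_mem' := ⟨continuous_zero, fun _ _ => rfl, contDiffOn_const, .zero, fun e => by simp⟩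
  add_mem' {u v} hu hv := by
    refine ⟨hu.continuous.add hv.continuous, fun x hx => ?_, hu.contDiffOn.add hv.contDiffOn,
      hu.memLp.add hv.memLp, fun e => ?_⟩
    · simp [hu.eq_zero x hx, hv.eq_zero x hx]
    · refine ((hu.memLp_restrict_fderiv e).add (hv.memLp_restrict_fderiv e)).ae_eq ?_
      filter_upwards [ae_restrict_mem U.isOpen.measurableSet] with x hx
      simp [fderiv_add (hu.differentiableAt U.isOpen hx) (hv.differentiableAt U.isOpen hx)]
  smul_mem' c u hu := by
    refine ⟨hu.continuous.const_smul c, fun x hx => by simp [hu.eq_zero x hx],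
      hu.contDiffOn.const_smul c, hu.memLp.const_smul c, fun e => ?_⟩
    simpa [fderiv_const_smul_field] using (hu.memLp_restrict_fderiv e).const_mul c

theorem TestFun.mem_energySpace [IsFiniteMeasureOnCompacts μ] {w : E → ℝ}
    (hw : TestFun (U : Set E) w) : w ∈ energySpace U μ :=
  ⟨hw.continuous, fun _ hx => hw.eq_zero hx, hw.contDiff.contDiffOn, hw.memLp,
    fun e => (hw.memLp_fderiv_apply e).restrict _⟩

namespace energySpace

theorem finiteEnergy (u : energySpace U μ) : FiniteEnergy U μ u := u.2

/-- The class in `L²` of a function of finite energy. -/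
def toL2 (U : TopologicalSpace.Opens E) (μ : Measure E) : energySpace U μ →ₗ[ℝ] Lp ℝ 2 μ where
  toFun u := (finiteEnergy u).memLp.toLp u
  map_add' _ _ := rfl
  map_smul' _ _ := rfl

/-- The `L²` inner product on the energy space. -/
def massForm (U : TopologicalSpace.Opens E) (μ : Measure E) :
    energySpace U μ →ₗ[ℝ] energySpace U μ →ₗ[ℝ] ℝ :=
  (innerₗ (Lp ℝ 2 μ)).compl₁₂ (toL2 U μ) (toL2 U μ)

theorem massForm_apply (u v : energySpace U μ) : massForm U μ u v = ∫ x, u.1 x * v.1 x ∂μ :=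
  inner_toLp (finiteEnergy u).memLp (finiteEnergy v).memLp

theorem massForm_comm (u v : energySpace U μ) : massForm U μ u v = massForm U μ v u :=
  real_inner_comm (toL2 U μ v) (toL2 U μ u)

theorem tendsto_massForm {α : Type*} {l : Filter α} {w w' : α → energySpace U μ}
    {u u' : energySpace U μ} (h : Tendsto (fun n => toL2 U μ (w n)) l (𝓝 (toL2 U μ u)))
    (h' : Tendsto (fun n => toL2 U μ (w' n)) l (𝓝 (toL2 U μ u'))) :
    Tendsto (fun n => massForm U μ (w n) (w' n)) l (𝓝 (massForm U μ u u')) :=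
  h.inner h'

theorem massForm_pos [μ.IsOpenPosMeasure] {u : energySpace U μ} (hu : u ≠ 0) :
    0 < massForm U μ u u := by
  refine real_inner_self_pos (F := Lp ℝ 2 μ).2 fun h => hu (Subtype.ext ?_)
  have hae : u.1 =ᵐ[μ] 0 := (Lp.eq_zero_iff_ae_eq_zero.1 h).symm.trans
    (finiteEnergy u).memLp.coeFn_toLp |>.symm
  exact ((finiteEnergy u).continuous.ae_eq_iff_eq μ continuous_zero).1 hae

variable [FiniteDimensional ℝ E] [μ.IsAddHaarMeasure]

/-- The directional derivative `∂ₑ` from the energy space to `L²`. -/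
def partialL2 (U : TopologicalSpace.Opens E) (μ : Measure E) [μ.IsAddHaarMeasure] (e : E) :
    energySpace U μ →ₗ[ℝ] Lp ℝ 2 μ where
  toFun u := ((finiteEnergy u).memLp_fderiv U.isOpen e).toLp _
  map_add' u v := by
    rw [← MemLp.toLp_add, MemLp.toLp_eq_toLp_iff]
    have hzero (w : energySpace U μ) :=
      ae_fderiv_apply_eq_zero_of_eq_zero μ (finiteEnergy w).continuous.measurable e
    filter_upwards [hzero u, hzero v, hzero (u + v)] with x hu hv huv
    by_cases hx : x ∈ U
    · simp [fderiv_add ((finiteEnergy u).differentiableAt U.isOpen hx)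
        ((finiteEnergy v).differentiableAt U.isOpen hx)]
    · rw [Pi.add_apply, hu ((finiteEnergy u).eq_zero x hx), hv ((finiteEnergy v).eq_zero x hx),
        huv ((finiteEnergy (u + v)).eq_zero x hx), add_zero]
  map_smul' c u := by
    rw [RingHom.id_apply, ← MemLp.toLp_const_smul, MemLp.toLp_eq_toLp_iff]
    exact .of_forall fun x => by simp [fderiv_const_smul_field]

theorem exists_testFun_tendsto (v : energySpace U μ) : ∃ w : ℕ → energySpace U μ,
    (∀ n, TestFun (U : Set E) (w n : E → ℝ)) ∧
      Tendsto (fun n => toL2 U μ (w n)) atTop (𝓝 (toL2 U μ v)) ∧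
      ∀ e, Tendsto (fun n => partialL2 U μ e (w n)) atTop (𝓝 (partialL2 U μ e v)) := by
  obtain ⟨w, hw, hlim, hlim'⟩ := (finiteEnergy v).exists_testFun_dominatedTendsto U.isOpen
  exact ⟨fun n => ⟨w n, (hw n).mem_energySpace⟩, hw, hlim.tendsto_toLp (fun n => (hw n).memLp)
    (finiteEnergy v).memLp, fun e => (hlim' e).tendsto_toLp (fun n => (hw n).memLp_fderiv_apply e)
      ((finiteEnergy v).memLp_fderiv U.isOpen e)⟩

section DirichletForm

variable {ι : Type*} [Fintype ι] {e : ι → E}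

/-- The Dirichlet form `∑ᵢ ∫ ∂ᵢu ∂ᵢv` on the energy space, where `∂ᵢ` is the derivative in the
direction `e i`. -/
def dirichletForm (U : TopologicalSpace.Opens E) (μ : Measure E) [μ.IsAddHaarMeasure]
    (e : ι → E) : energySpace U μ →ₗ[ℝ] energySpace U μ →ₗ[ℝ] ℝ :=
  ∑ i, (innerₗ (Lp ℝ 2 μ)).compl₁₂ (partialL2 U μ (e i)) (partialL2 U μ (e i))

theorem dirichletForm_eq_sum_inner (u v : energySpace U μ) : dirichletForm U μ e u v =
    ∑ i, inner ℝ (partialL2 U μ (e i) u) (partialL2 U μ (e i) v) := by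
  simp [dirichletForm]

theorem dirichletForm_apply (u v : energySpace U μ) : dirichletForm U μ e u v =
    ∑ i, ∫ x, fderiv ℝ u.1 x (e i) * fderiv ℝ v.1 x (e i) ∂μ := by
  rw [dirichletForm_eq_sum_inner]
  exact Finset.sum_congr rfl fun i _ => inner_toLp
    ((finiteEnergy u).memLp_fderiv U.isOpen (e i)) ((finiteEnergy v).memLp_fderiv U.isOpen (e i))

theorem dirichletForm_comm (u v : energySpace U μ) :
    dirichletForm U μ e u v = dirichletForm U μ e v u := by
  simp only [dirichletForm_eq_sum_inner, real_inner_comm]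

theorem tendsto_dirichletForm {α : Type*} {l : Filter α} {w w' : α → energySpace U μ}
    {u u' : energySpace U μ}
    (h : ∀ i, Tendsto (fun n => partialL2 U μ (e i) (w n)) l (𝓝 (partialL2 U μ (e i) u)))
    (h' : ∀ i, Tendsto (fun n => partialL2 U μ (e i) (w' n)) l (𝓝 (partialL2 U μ (e i) u'))) :
    Tendsto (fun n => dirichletForm U μ e (w n) (w' n)) l (𝓝 (dirichletForm U μ e u u')) := by
  simp only [dirichletForm_eq_sum_inner]
  exact tendsto_finsetSum _ fun i _ => (h i).inner (h' i)

theorem dirichletForm_eq_of_testFun {lam : ℝ} {u : energySpace U μ} (hu : ContDiffOn ℝ 2 u.1 U)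
    (heq : ∀ x ∈ U, -∑ i, fderiv ℝ (fun y => fderiv ℝ u.1 y (e i)) x (e i) = lam * u.1 x)
    {w : energySpace U μ} (hw : TestFun (U : Set E) w.1) :
    dirichletForm U μ e w u = lam * massForm U μ w u := by
  have hpartial (i : ι) : ContDiffOn ℝ 1 (fun x => fderiv ℝ u.1 x (e i)) U :=
    (hu.fderiv_of_isOpen U.isOpen (by norm_num)).clm_apply contDiffOn_const
  rw [dirichletForm_apply, massForm_apply, Finset.sum_congr rfl fun i _ =>
    hw.integral_fderiv_apply_mul U.isOpen (hpartial i) (e i), Finset.sum_neg_distrib,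
    ← integral_finsetSum _ fun i _ => hw.integrable_mul_fderiv_apply U.isOpen (hpartial i) (e i),
    ← integral_neg, ← integral_const_mul]
  refine integral_congr_ae (.of_forall fun x => ?_)
  by_cases hx : x ∈ U
  · simp only [← Finset.mul_sum]
    linear_combination w.1 x * heq x hx
  · simp [hw.eq_zero hx]

theorem mem_formEigenspace_dirichletForm {lam : ℝ} {u : energySpace U μ}
    (hu : ContDiffOn ℝ 2 u.1 U)
    (heq : ∀ x ∈ U, -∑ i, fderiv ℝ (fun y => fderiv ℝ u.1 y (e i)) x (e i) = lam * u.1 x) :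
    u ∈ formEigenspace (dirichletForm U μ e) (massForm U μ) lam := by
  refine mem_formEigenspace.2 fun v => ?_
  obtain ⟨w, hw, hlim, hlim'⟩ := exists_testFun_tendsto v
  refine tendsto_nhds_unique
    (tendsto_dirichletForm (fun i => hlim' (e i)) fun _ => tendsto_const_nhds) ?_
  simpa only [dirichletForm_eq_of_testFun hu heq (hw _)] using
    (tendsto_massForm hlim tendsto_const_nhds).const_mul lam

end DirichletForm

end energySpace

end EnergySpace

/-! ### Bound states of the Fichera layer -/

instance isAddHaarMeasure_volume_prod {G H : Type*} [AddGroup G] [TopologicalSpace G]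
    [MeasureSpace G] [BorelSpace G] [SecondCountableTopology G] [IsTopologicalAddGroup G]
    [(volume : Measure G).IsAddHaarMeasure] [SFinite (volume : Measure G)] [AddGroup H]
    [TopologicalSpace H] [MeasureSpace H] [BorelSpace H] [IsTopologicalAddGroup H]
    [(volume : Measure H).IsAddHaarMeasure] [SFinite (volume : Measure H)] :
    (volume : Measure (G × H)).IsAddHaarMeasure :=
  Measure.prod.instIsAddHaarMeasure _ _

theorem isOpen_Lam3 : IsOpen Lam3 :=
  have hmin : Continuous fun x : ℝ × ℝ × ℝ => min x.1 (min x.2.1 x.2.2) := by fun_prop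
  (isOpen_lt continuous_const hmin).inter (isOpen_lt hmin continuous_const)

/-- The Fichera layer as an open subset of `ℝ³`. -/
def ficheraLayer : TopologicalSpace.Opens (ℝ × ℝ × ℝ) := ⟨Lam3, isOpen_Lam3⟩

/-- The standard basis of `ℝ × ℝ × ℝ`. -/
def axis : Fin 3 → ℝ × ℝ × ℝ := ![(1, 0, 0), (0, 1, 0), (0, 0, 1)]

theorem sum_fderiv_axis_sq (u : ℝ × ℝ × ℝ → ℝ) (x : ℝ × ℝ × ℝ) :
    ∑ i, fderiv ℝ u x (axis i) ^ 2 = gradSq3 u x := by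
  simp [Fin.sum_univ_three, axis, gradSq3]

theorem memLp_fderiv_of_integrable_gradSq3 {μ : Measure (ℝ × ℝ × ℝ)} {u : ℝ × ℝ × ℝ → ℝ}
    (hu : Integrable (gradSq3 u) μ) (e : ℝ × ℝ × ℝ) : MemLp (fun x => fderiv ℝ u x e) 2 μ := by
  have hmeas (e : ℝ × ℝ × ℝ) : Measurable fun x => fderiv ℝ u x e :=
    measurable_fderiv_apply_const ℝ u e
  have haxis (i : Fin 3) : MemLp (fun x => fderiv ℝ u x (axis i)) 2 μ := by
    refine (memLp_two_iff_integrable_sq (hmeas _).aestronglyMeasurable).2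
      (hu.mono' ((hmeas _).pow_const 2).aestronglyMeasurable (.of_forall fun x => ?_))
    rw [Real.norm_of_nonneg (sq_nonneg _), ← sum_fderiv_axis_sq]
    exact Finset.single_le_sum (f := fun i => fderiv ℝ u x (axis i) ^ 2)
      (fun i _ => sq_nonneg _) (Finset.mem_univ i)
  have he : e = e.1 • axis 0 + e.2.1 • axis 1 + e.2.2 • axis 2 := by ext <;> simp [axis]
  rw [he]
  simp only [map_add, map_smul, smul_eq_mul]
  exact (((haxis 0).const_mul _).add ((haxis 1).const_mul _)).add ((haxis 2).const_mul _)

theorem IsEigenLam.finiteEnergy {lam : ℝ} {u : ℝ × ℝ × ℝ → ℝ} (hu : IsEigenLam lam u) :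
    FiniteEnergy Lam3 volume u := by
  obtain ⟨hcont, hzero, hdiff, hsq, hgrad, -, -⟩ := hu
  refine ⟨hcont, hzero, hdiff.of_le one_le_two, ?_, memLp_fderiv_of_integrable_gradSq3 hgrad⟩
  rw [memLp_two_iff_integrable_sq hcont.aestronglyMeasurable,
    ← integrableOn_iff_integrable_of_support_subset (s := Lam3) fun x hx => ?_]
  · exact hsq
  · by_contra h
    exact hx (by simp [hzero x h])

theorem volume_cell_ne_top (h : ℝ) (v : ℤ × ℤ × ℤ) : volume (cell h v) ≠ ⊤ := by
  simp [cell, Measure.volume_eq_prod, Measure.prod_prod, ENNReal.mul_eq_top]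

/-- The integrals over the cells with index in `s`. -/
def cellIntegrals (h : ℝ) (s : Finset (ℤ × ℤ × ℤ)) :
    Lp ℝ 2 (volume : Measure (ℝ × ℝ × ℝ)) →L[ℝ] s → ℝ :=
  .pi fun v => innerSL ℝ
    (indicatorConstLp 2 (measurableSet_cell h v) (volume_cell_ne_top h v) (1 : ℝ))

theorem cellIntegrals_toLp (h : ℝ) (s : Finset (ℤ × ℤ × ℤ)) {f : ℝ × ℝ × ℝ → ℝ}
    (hf : MemLp f 2) (v : s) : cellIntegrals h s (hf.toLp f) v = ∫ x in cell h v, f x := by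
  refine (L2.inner_indicatorConstLp_one (measurableSet_cell h v) (volume_cell_ne_top h v) _).trans
    ?_
  exact integral_congr_ae (ae_restrict_of_ae hf.coeFn_toLp)

namespace energySpace

theorem mem_formEigenspace_of_isEigenLam {lam : ℝ} {u : energySpace ficheraLayer volume}
    (hu : IsEigenLam lam u.1) :
    u ∈ formEigenspace (dirichletForm ficheraLayer volume axis) (massForm ficheraLayer volume)
      lam := by
  obtain ⟨-, -, hdiff, -, -, heq, -⟩ := hu
  refine mem_formEigenspace_dirichletForm hdiff fun x hx => ?_
  rw [Fin.sum_univ_three]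
  exact heq x hx

theorem integral_formDensity {w : energySpace ficheraLayer volume} (hw : TestFun Lam3 w.1) :
    ∫ x, formDensity w.1 x =
      dirichletForm ficheraLayer volume axis w w - lamG * massForm ficheraLayer volume w w := by
  simp only [formDensity]
  rw [integral_sub hw.integrable_gradSq3 (hw.integrable_sq.const_mul _), integral_const_mul,
    dirichletForm_apply, massForm_apply]
  simp only [← sq, ← sum_fderiv_axis_sq]
  rw [integral_finsetSum _ fun i _ => hw.integrable_fderiv_apply_sq (axis i)]

theorem exists_dirichletForm_add_sum_sq_nonneg :
    ∃ (s : Finset (ℤ × ℤ × ℤ)) (h C : ℝ), ∀ u : energySpace ficheraLayer volume,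
      lamG * massForm ficheraLayer volume u u ≤ dirichletForm ficheraLayer volume axis u u +
        C * ∑ v, cellIntegrals h s (toL2 _ _ u) v ^ 2 := by
  obtain ⟨s, h, C, hC⟩ := exists_form_add_sum_sq_nonneg
  refine ⟨s, h, C, fun u => ?_⟩
  obtain ⟨w, hw, hlim, hlim'⟩ := exists_testFun_tendsto u
  have hcell : Tendsto (fun n => ∑ v, cellIntegrals h s (toL2 _ _ (w n)) v ^ 2) atTop
      (𝓝 (∑ v, cellIntegrals h s (toL2 _ _ u) v ^ 2)) :=
    ((by fun_prop : Continuous fun f => ∑ v, cellIntegrals h s f v ^ 2).tendsto _).comp hlim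
  refine le_of_tendsto_of_tendsto' ((tendsto_massForm hlim hlim).const_mul lamG)
    ((tendsto_dirichletForm (fun i => hlim' (axis i)) fun i => hlim' (axis i)).add
      (hcell.const_mul C)) fun n => ?_
  have hsum : ∑ v, cellIntegrals h s (toL2 _ _ (w n)) v ^ 2 =
      ∑ v : s, (∫ x in cell h v, (w n).1 x) ^ 2 :=
    Finset.sum_congr rfl fun v _ =>
      congrArg (· ^ 2) (cellIntegrals_toLp h s (finiteEnergy (w n)).memLp v)
  rw [hsum, ← sub_nonneg, add_sub_right_comm, ← integral_formDensity (hw n)]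
  simpa only [Finset.sum_coe_sort s fun v => (∫ x in cell h v, (w n).1 x) ^ 2] using
    hC (w n) (hw n)

theorem finiteDimensional_iSup_formEigenspace_ficheraLayer :
    FiniteDimensional ℝ ↥(⨆ i : Iio lamG, formEigenspace
      (dirichletForm ficheraLayer volume axis) (massForm ficheraLayer volume) i) := by
  obtain ⟨s, h, C, hform⟩ := exists_dirichletForm_add_sum_sq_nonneg
  refine finiteDimensional_iSup_formEigenspace dirichletForm_comm massForm_comm
    (fun _ => massForm_pos) ((cellIntegrals h s).toLinearMap ∘ₗ toL2 ficheraLayer volume)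
    fun u hu => ?_
  simpa [show cellIntegrals h s (toL2 _ _ u) = 0 from hu] using hform u

end energySpace

/-- Theorem 1.2 ii: the Dirichlet Laplacian on the Fichera layer `Λ`
has at most finitely many bound states below the threshold `λ₁(Γ)`: the linear span of
all eigenfunctions with eigenvalue below `λ₁(Γ)` is finite-dimensional. -/
theorem finitely_many_bound_states :
    FiniteDimensional ℝ
      ↥(Submodule.span ℝ {u : ℝ × ℝ × ℝ → ℝ | ∃ lam < lamG, IsEigenLam lam u}) := by
  let V := ⨆ i : Iio lamG, formEigenspace (energySpace.dirichletForm ficheraLayer volume axis)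
    (energySpace.massForm ficheraLayer volume) i
  have hfin : FiniteDimensional ℝ V :=
    energySpace.finiteDimensional_iSup_formEigenspace_ficheraLayer
  have hspan : Submodule.span ℝ {u | ∃ lam < lamG, IsEigenLam lam u} ≤
      V.map (energySpace ficheraLayer volume).subtype := by
    refine Submodule.span_le.2 fun u ⟨lam, hlam, hu⟩ => ⟨⟨u, hu.finiteEnergy⟩, ?_, rfl⟩
    exact (le_iSup (fun i : Iio lamG => formEigenspace _ _ (i : ℝ)) ⟨lam, hlam⟩)
      (energySpace.mem_formEigenspace_of_isEigenLam hu)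
  exact Submodule.finiteDimensional_of_le hspan
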